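/- arXiv:1512.01500 — 3 statements merged into one kernel-verified Lean document; each statement's English description precedes it below -/
import Mathlib

section
/- Let G be a group generated by a finite symmetric set S, and suppose G has Kazhdan's property (T). Then there is r > 0 (one may take r = c²/(4π) for a Kazhdan constant c) with the following property: for every ergodic measure-preserving G-action T on a standard probability space (X, μ), every closed subgroup K of the circle group 𝕋 = ℝ/ℤ, and every K-valued 1-cocycle α ∈ Z^1(T, μ, K) with ‖α‖_{μ,S} ≤ r, α is a 1-coboundary, i.e., α ∈ B^1(T, μ, K). -/
open MeasureTheory Filter Topology
open scoped ENNReal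

/-- Property (T) for the group `G` with respect to the finite generating set `S`: there is
`c > 0` such that any unitary representation with a `(S, c)`-invariant unit vector has a
nonzero invariant vector. -/
def HasPropertyT (G : Type*) [Group G] (S : Finset G) : Prop :=
  ∃ c : ℝ, 0 < c ∧
    ∀ (H : Type) (_ : NormedAddCommGroup H) (_ : InnerProductSpace ℂ H) (_ : CompleteSpace H),
      ∀ π : G →* (H ≃ₗᵢ[ℂ] H),
        (∃ v : H, ‖v‖ = 1 ∧ ∀ s ∈ S, ‖π s v - v‖ ≤ c) →
        ∃ w : H, w ≠ 0 ∧ ∀ g : G, π g w = w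

/-- A measure-preserving left action of `G` on `(X, μ)`. -/
def IsMPAction {G : Type*} [Group G] {X : Type*} [MeasurableSpace X]
    (T : G → X → X) (μ : Measure X) : Prop :=
  (∀ g, Measurable (T g)) ∧ (∀ g, Measure.map (T g) μ = μ) ∧
    T 1 = id ∧ ∀ g h, T (g * h) = T g ∘ T h

/-- Ergodicity: every strictly invariant measurable set is null or conull. -/
def IsErgodicAction {G : Type*} [Group G] {X : Type*} [MeasurableSpace X]
    (T : G → X → X) (μ : Measure X) : Prop :=
  ∀ A : Set X, MeasurableSet A → (∀ g, T g ⁻¹' A = A) → μ A = 0 ∨ μ A = 1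

/-- The sum `α(w, x)` of the cochain `α` along the word `w = s_ℓ ⋯ s_1` (the list is read with
its head the last letter applied): `α(w,x) = α(s_1,x) + α(s_2, T^{s_1}x) + ⋯`. -/
noncomputable def cocycleSum {G X : Type*} [Group G] (T : G → X → X)
    (α : G → X → UnitAddCircle) : List G → X → UnitAddCircle
  | [], _ => 0
  | s :: w, x => cocycleSum T α w x + α s (T w.prod x)

/-- `α` is a `K`-valued 1-cocycle over the system `(X, μ, T)` with respect to the generating
set `S`: it is measurable, `K`-valued, and its 2-coboundary vanishes along every relation. -/
def IsCocycle {G : Type*} [Group G] {X : Type*} [MeasurableSpace X] (S : Finset G)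
    (T : G → X → X) (μ : Measure X) (K : AddSubgroup UnitAddCircle)
    (α : G → X → UnitAddCircle) : Prop :=
  (∀ s ∈ S, Measurable (α s)) ∧ (∀ s ∈ S, ∀ x, α s x ∈ K) ∧
  ∀ w : List G, (∀ s ∈ w, s ∈ S) → w.prod = 1 → ∀ᵐ x ∂μ, cocycleSum T α w x = 0

theorem aux_word {G : Type*} [Group G] (S : Finset G)
    (hsym : ∀ s ∈ S, s⁻¹ ∈ S) (hgen : Subgroup.closure (S : Set G) = ⊤) (g : G) :
    ∃ w : List G, (∀ s ∈ w, s ∈ S) ∧ w.prod = g := by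
  have h : g ∈ (Subgroup.closure (S : Set G)).toSubmonoid := by rw [hgen]; trivial
  rw [Subgroup.closure_toSubmonoid] at h
  obtain ⟨l, hl, hp⟩ := Submonoid.exists_list_of_mem_closure h
  refine ⟨l, fun s hs => ?_, hp⟩
  rcases hl s hs with h | h
  · exact h
  · simpa using hsym _ h

theorem aux_countable {G : Type*} [Group G] (S : Finset G)
    (hw : ∀ g : G, ∃ w : List G, (∀ s ∈ w, s ∈ S) ∧ w.prod = g) : Countable G := by
  have : Function.Surjective (fun w : List S => (w.map Subtype.val).prod) := by
    intro g
    obtain ⟨w, hw, rfl⟩ := hw g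
    lift w to List S using hw
    exact ⟨w, rfl⟩
  exact this.countable

theorem aux_append {G X : Type*} [Group G] (T : G → X → X)
    (hT1 : ∀ g h, T (g * h) = T g ∘ T h) (α : G → X → UnitAddCircle) (u w : List G) (x : X) :
    cocycleSum T α (u ++ w) x = cocycleSum T α w x + cocycleSum T α u (T w.prod x) := by
  induction u with
  | nil => simp [cocycleSum]
  | cons s u ih => simp [cocycleSum, ih, hT1, add_assoc]

theorem aux_erg {G : Type*} [Group G] [Countable G] {X : Type*} [MeasurableSpace X]
    (T : G → X → X) (μ : Measure X) [IsProbabilityMeasure μ]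
    (hT : IsMPAction T μ) (hE : IsErgodicAction T μ) (A : Set X) (hA : MeasurableSet A)
    (hi : ∀ g, ∀ᵐ x ∂μ, T g x ∈ A ↔ x ∈ A) :
    (∀ᵐ x ∂μ, x ∈ A) ∨ (∀ᵐ x ∂μ, x ∉ A) := by
  obtain ⟨hm, hp, h1, h2⟩ := hT
  set B : Set X := ⋂ g, T g ⁻¹' A with hB
  have hBm : MeasurableSet B := MeasurableSet.iInter fun g => hm g hA
  have hBi : ∀ g, T g ⁻¹' B = B := by
    intro g
    ext x
    simp only [hB, Set.mem_preimage, Set.mem_iInter]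
    constructor
    · intro h k
      have := h (k * g⁻¹)
      rw [← Function.comp_apply (f := T (k * g⁻¹)), ← h2] at this
      simpa using this
    · intro h k
      rw [← Function.comp_apply (f := T k), ← h2]
      exact h _
  have hAB : ∀ᵐ x ∂μ, x ∈ B ↔ x ∈ A := by
    filter_upwards [ae_all_iff.2 hi] with x hx
    simp only [hB, Set.mem_iInter, Set.mem_preimage, hx, forall_const]
  rcases hE B hBm hBi with h | h
  · right
    have : ∀ᵐ x ∂μ, x ∉ B := measure_eq_zero_iff_ae_notMem.1 h
    filter_upwards [this, hAB] with x h1 h2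
    rwa [← h2]
  · left
    have : ∀ᵐ x ∂μ, x ∈ B := (prob_compl_eq_zero_iff hBm).2 h
    filter_upwards [this, hAB] with x h1 h2
    rwa [← h2]

theorem aux_bound (t : UnitAddCircle) :
    ‖(AddCircle.toCircle t : ℂ) - 1‖ ≤ 2 * Real.pi * ‖t‖ := by
  obtain ⟨x, rfl⟩ := QuotientAddGroup.mk_surjective t
  have e : ((x : ℝ) : UnitAddCircle) = ((x - round x : ℝ) : UnitAddCircle) := by
    rw [AddCircle.coe_sub]
    have : ((round x : ℝ) : UnitAddCircle) = 0 := by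
      rw [AddCircle.coe_eq_zero_iff]; exact ⟨round x, by simp⟩
    rw [this, sub_zero]
  change ‖(AddCircle.toCircle (x : UnitAddCircle) : ℂ) - 1‖ ≤ 2 * Real.pi * ‖(x : UnitAddCircle)‖
  rw [UnitAddCircle.norm_eq, e, AddCircle.toCircle_apply_mk, Circle.coe_exp, mul_comm _ Complex.I]
  refine Real.norm_exp_I_mul_ofReal_sub_one_le.trans ?_
  rw [Real.norm_eq_abs, abs_mul, div_one, abs_of_pos Real.two_pi_pos]

theorem aux_bound2 (t : UnitAddCircle) :
    ‖(AddCircle.toCircle t : ℂ) - 1‖ ^ 2 ≤ 4 * Real.pi * ‖t‖ := by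
  have h1 := aux_bound t
  have h2 : ‖(AddCircle.toCircle t : ℂ) - 1‖ ≤ 2 := by
    refine (norm_sub_le _ _).trans ?_
    simp only [Circle.norm_coe, norm_one]; norm_num
  nlinarith [norm_nonneg ((AddCircle.toCircle t : ℂ) - 1)]

section rep
variable {G : Type*} [Group G] {X : Type} [MeasurableSpace X] {μ : Measure X}

theorem aux_memLp {T : X → X} (hT : MeasurePreserving T μ μ) {a : X → UnitAddCircle}
    (ha : Measurable a) (f : Lp ℂ 2 μ) :
    MemLp (fun x => (AddCircle.toCircle (a x) : ℂ) * f (T x)) 2 μ := by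
  have hm : Measurable fun x => (AddCircle.toCircle (a x) : ℂ) :=
    (continuous_subtype_val.comp AddCircle.continuous_toCircle).measurable.comp ha
  have h1 : MemLp (fun x => f (T x)) 2 μ := (Lp.memLp f).comp_measurePreserving hT
  refine h1.congr_norm (hm.aestronglyMeasurable.mul h1.1) ?_
  filter_upwards with x
  rw [norm_mul, Circle.norm_coe, one_mul]

noncomputable def auxU {T : X → X} (hT : MeasurePreserving T μ μ) {a : X → UnitAddCircle}
    (ha : Measurable a) : Lp ℂ 2 μ →ₗᵢ[ℂ] Lp ℂ 2 μ where
  toFun f := (aux_memLp hT ha f).toLp _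
  map_add' f g := by
    rw [← MemLp.toLp_add, MemLp.toLp_eq_toLp_iff]
    filter_upwards [hT.quasiMeasurePreserving.ae (Lp.coeFn_add f g)] with x hx
    simp only [Pi.add_apply] at hx ⊢
    rw [hx, mul_add]
  map_smul' c f := by
    rw [RingHom.id_apply, ← MemLp.toLp_const_smul, MemLp.toLp_eq_toLp_iff]
    filter_upwards [hT.quasiMeasurePreserving.ae (Lp.coeFn_smul c f)] with x hx
    simp only [Pi.smul_apply, smul_eq_mul] at hx ⊢
    rw [hx]; ring
  norm_map' f := by
    simp only [LinearMap.coe_mk, AddHom.coe_mk]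
    rw [Lp.norm_toLp, Lp.norm_def, ← eLpNorm_comp_measurePreserving (Lp.memLp f).1 hT]
    congr 1
    apply eLpNorm_congr_norm_ae
    filter_upwards with x
    rw [norm_mul, Circle.norm_coe, one_mul, Function.comp_apply]

theorem auxU_coe {T : X → X} (hT : MeasurePreserving T μ μ) {a : X → UnitAddCircle}
    (ha : Measurable a) (f : Lp ℂ 2 μ) :
    auxU hT ha f =ᵐ[μ] fun x => (AddCircle.toCircle (a x) : ℂ) * f (T x) :=
  MemLp.coeFn_toLp (aux_memLp hT ha f)

theorem auxU_comp {T : G → X → X} (hT : ∀ g, MeasurePreserving (T g) μ μ)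
    (h2 : ∀ g h, T (g * h) = T g ∘ T h)
    {a : G → X → UnitAddCircle} (ha : ∀ g, Measurable (a g))
    (hc : ∀ g h, ∀ᵐ x ∂μ, a (g * h) x = a h x + a g (T h x)) (g h : G) (f : Lp ℂ 2 μ) :
    auxU (hT (g * h)) (ha (g * h)) f = auxU (hT h) (ha h) (auxU (hT g) (ha g) f) := by
  apply Lp.ext
  filter_upwards [auxU_coe (hT (g * h)) (ha (g * h)) f,
    auxU_coe (hT h) (ha h) (auxU (hT g) (ha g) f),
    (hT h).quasiMeasurePreserving.ae (auxU_coe (hT g) (ha g) f), hc g h] with x e1 e2 e3 e4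
  rw [e1, e2, e3, e4, h2, AddCircle.toCircle_add, Circle.coe_mul, mul_assoc]
  rfl

theorem auxU_one {T : G → X → X} (hT : ∀ g, MeasurePreserving (T g) μ μ)
    (h1 : T 1 = id) (h2 : ∀ g h, T (g * h) = T g ∘ T h)
    {a : G → X → UnitAddCircle} (ha : ∀ g, Measurable (a g))
    (hc : ∀ g h, ∀ᵐ x ∂μ, a (g * h) x = a h x + a g (T h x)) (f : Lp ℂ 2 μ) :
    auxU (hT 1) (ha 1) f = f := by
  have h := auxU_comp hT h2 ha hc 1 1 f
  simp only [mul_one] at h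
  exact ((auxU (hT 1) (ha 1)).injective h).symm

noncomputable def auxPi {T : G → X → X} (hT : ∀ g, MeasurePreserving (T g) μ μ)
    (h1 : T 1 = id) (h2 : ∀ g h, T (g * h) = T g ∘ T h)
    {a : G → X → UnitAddCircle} (ha : ∀ g, Measurable (a g))
    (hc : ∀ g h, ∀ᵐ x ∂μ, a (g * h) x = a h x + a g (T h x)) :
    G →* (Lp ℂ 2 μ ≃ₗᵢ[ℂ] Lp ℂ 2 μ) where
  toFun g := LinearIsometryEquiv.ofSurjective (auxU (hT g⁻¹) (ha g⁻¹)) (fun f =>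
    ⟨auxU (hT g) (ha g) f, by
      rw [← auxU_comp hT h2 ha hc]
      simp only [mul_inv_cancel]
      exact auxU_one hT h1 h2 ha hc f⟩)
  map_one' := by
    ext1 f
    simp only [inv_one, LinearIsometryEquiv.coe_ofSurjective, LinearIsometryEquiv.coe_one, id]
    exact auxU_one hT h1 h2 ha hc f
  map_mul' g h := by
    ext1 f
    simp only [mul_inv_rev, LinearIsometryEquiv.coe_ofSurjective, LinearIsometryEquiv.coe_mul,
      Function.comp_apply]
    exact auxU_comp hT h2 ha hc _ _ f

theorem aux_normsq (f : Lp ℂ 2 μ) : ‖f‖ ^ 2 = ∫ x, ‖f x‖ ^ 2 ∂μ := by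
  have h : (inner ℂ f f : ℂ) = ∫ x, inner ℂ (f x) (f x) ∂μ := L2.inner_def f f
  have h3 : ∀ x, (inner ℂ (f x) (f x) : ℂ) = ((‖f x‖ ^ 2 : ℝ) : ℂ) := fun x => by
    rw [inner_self_eq_norm_sq_to_K]; simp
  rw [inner_self_eq_norm_sq_to_K] at h
  simp only [h3] at h
  rw [integral_complex_ofReal] at h
  apply Complex.ofReal_injective
  rw [← h]
  push_cast
  rfl

theorem aux_arg (z : ℂ) :
    z = ‖z‖ * (AddCircle.toCircle ((Complex.arg z / (2 * Real.pi) : ℝ) : UnitAddCircle) : ℂ) := by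
  rw [AddCircle.toCircle_apply_mk, Circle.coe_exp, div_one,
    mul_div_cancel₀ _ Real.two_pi_pos.ne']
  exact (Complex.norm_mul_exp_arg_mul_I z).symm
end rep

theorem aux_ext {G : Type*} [Group G] (S : Finset G)
    (hw : ∀ g : G, ∃ w : List G, (∀ s ∈ w, s ∈ S) ∧ w.prod = g)
    {X : Type} [MeasurableSpace X] {μ : Measure X} {T : G → X → X} (hT : IsMPAction T μ)
    {K : AddSubgroup UnitAddCircle} {α : G → X → UnitAddCircle} (hα : IsCocycle S T μ K α) :
    ∃ a : G → X → UnitAddCircle, (∀ g, Measurable (a g)) ∧ (∀ g x, a g x ∈ K) ∧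
      (∀ g h, ∀ᵐ x ∂μ, a (g * h) x = a h x + a g (T h x)) ∧
      ∀ s ∈ S, a s =ᵐ[μ] α s := by
  obtain ⟨hm, hp, h1, h2⟩ := hT
  obtain ⟨am, aK, ac⟩ := hα
  have key : ∀ w w' : List G, (∀ s ∈ w, s ∈ S) → (∀ s ∈ w', s ∈ S) → w.prod = w'.prod →
      cocycleSum T α w =ᵐ[μ] cocycleSum T α w' := by
    intro w w' hwS hwS' he
    obtain ⟨u, hu, hup⟩ := hw w.prod⁻¹
    have e1 := ac (u ++ w) (by simpa [or_imp, forall_and] using ⟨hu, hwS⟩) (by simp [hup])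
    have e2 := ac (u ++ w') (by simpa [or_imp, forall_and] using ⟨hu, hwS'⟩)
      (by simp [hup, he])
    filter_upwards [e1, e2] with x e1 e2
    rw [aux_append T h2] at e1 e2
    rw [← he, ← e1] at e2
    exact (add_right_cancel e2).symm
  choose W hWS hWp using hw
  refine ⟨fun g => cocycleSum T α (W g), fun g => ?_, fun g => ?_, fun g h => ?_, fun s hs => ?_⟩
  · have : ∀ w : List G, (∀ s ∈ w, s ∈ S) → Measurable (cocycleSum T α w) := by
      intro w
      induction w with
      | nil => intro _; exact measurable_const
      | cons s w ih =>
        intro h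
        exact (ih fun t ht => h t (List.mem_cons_of_mem _ ht)).add
          ((am s (h s List.mem_cons_self)).comp (hm _))
    exact this _ (hWS g)
  · have : ∀ w : List G, (∀ s ∈ w, s ∈ S) → ∀ x, cocycleSum T α w x ∈ K := by
      intro w
      induction w with
      | nil => intro _ x; exact K.zero_mem
      | cons s w ih =>
        intro h x
        exact K.add_mem (ih (fun t ht => h t (List.mem_cons_of_mem _ ht)) x)
          (aK s (h s List.mem_cons_self) _)
    exact this _ (hWS g)
  · filter_upwards [key (W (g * h)) (W g ++ W h) (hWS _)
      (by simpa [or_imp, forall_and] using ⟨hWS g, hWS h⟩) (by simp [hWp])] with x hx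
    rw [hx, aux_append T h2, hWp]
  · filter_upwards [key (W s) [s] (hWS _) (by simpa using hs) (by simp [hWp])] with x hx
    rw [hx]
    simp [cocycleSum, h1]

theorem aux_K {G : Type*} [Group G] [Countable G] {X : Type} [MeasurableSpace X] {μ : Measure X}
    [IsProbabilityMeasure μ] {T : G → X → X} (hT : IsMPAction T μ) (hE : IsErgodicAction T μ)
    (K : AddSubgroup UnitAddCircle) (hK : IsClosed (K : Set UnitAddCircle))
    (β : X → UnitAddCircle) (hβ : Measurable β)
    (h : ∀ g, ∀ᵐ x ∂μ, β (T g x) - β x ∈ K) :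
    ∃ b, ∀ᵐ x ∂μ, β x - b ∈ K := by
  haveI := hK
  let q : UnitAddCircle → UnitAddCircle ⧸ K := QuotientAddGroup.mk
  have hq : Continuous q := continuous_quot_mk
  haveI : SecondCountableTopology (UnitAddCircle ⧸ K) := inferInstance
  haveI : T3Space (UnitAddCircle ⧸ K) := inferInstance
  obtain ⟨c, hc⟩ := exists_eventuallyEq_const_of_forall_separating (l := ae μ)
    (f := fun x => q (β x)) IsOpen (by
      intro U hU
      refine aux_erg T μ hT hE {x | q (β x) ∈ U}
        (hβ (hU.preimage hq).measurableSet) fun g => ?_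
      filter_upwards [h g] with x hx
      have : q (β (T g x)) = q (β x) := by
        rw [eq_comm]
        refine (QuotientAddGroup.eq).2 ?_
        rwa [neg_add_eq_sub]
      simp only [Set.mem_setOf_eq, this])
  obtain ⟨b, rfl⟩ := QuotientAddGroup.mk_surjective c
  refine ⟨b, ?_⟩
  filter_upwards [hc] with x hx
  have := (QuotientAddGroup.eq).1 (Eq.symm hx)
  rwa [neg_add_eq_sub] at this

/-- **(Schmidt, Zimmer.)**  If `G` has property (T) with respect to the finite symmetric
generating set `S`, then there is `r > 0` such that over every ergodic `G`-system, every
`K`-valued 1-cocycle `α` with `‖α‖_{μ,S} ≤ r` is a coboundary, for every closed subgroup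
`K ≤ 𝕋`. -/
theorem small_cocycles_are_coboundaries {G : Type*} [Group G] (S : Finset G)
    (hsym : ∀ s ∈ S, s⁻¹ ∈ S) (hgen : Subgroup.closure (S : Set G) = ⊤)
    (hT : HasPropertyT G S) :
    ∃ r : ℝ, 0 < r ∧
      ∀ (X : Type) (_ : MeasurableSpace X) (_ : StandardBorelSpace X) (μ : Measure X),
        IsProbabilityMeasure μ →
        ∀ T : G → X → X, IsMPAction T μ → IsErgodicAction T μ →
          ∀ K : AddSubgroup UnitAddCircle, IsClosed (K : Set UnitAddCircle) →
            ∀ α : G → X → UnitAddCircle, IsCocycle S T μ K α →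
              (∑ s ∈ S, ∫ x, ‖α s x‖ ∂μ) ≤ r →
              ∃ β : X → UnitAddCircle, Measurable β ∧ (∀ x, β x ∈ K) ∧
                ∀ s ∈ S, ∀ᵐ x ∂μ, α s x = β (T s x) - β x := by
  obtain ⟨c, hc, hrep⟩ := hT
  have hw := aux_word S hsym hgen
  haveI : Countable G := aux_countable S hw
  refine ⟨c ^ 2 / (4 * Real.pi), by positivity, ?_⟩
  intro X _ _ μ _ T hT hE K hK α hα hr
  obtain ⟨a, ham, hgood, hac, haα⟩ := aux_ext S hw hT hα
  have hmp : ∀ g, MeasurePreserving (T g) μ μ := fun g => ⟨hT.1 g, hT.2.1 g⟩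
  have h1 := hT.2.2.1
  have h2 := hT.2.2.2
  let v : Lp ℂ 2 μ := (memLp_const (1 : ℂ)).toLp (fun _ => (1 : ℂ))
  have hv : v =ᵐ[μ] fun _ => (1 : ℂ) := MemLp.coeFn_toLp _
  have hv1 : ‖v‖ = 1 := by
    have : ‖v‖ ^ 2 = 1 := by
      rw [aux_normsq, integral_congr_ae (g := fun _ => (1 : ℝ))]
      · simp
      · filter_upwards [hv] with x hx
        simp [hx]
    nlinarith [norm_nonneg v]
  have hαint : ∀ s ∈ S, Integrable (fun x => ‖α s x‖) μ := by
    intro s hs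
    refine Integrable.of_bound (C := 1 / 2) (hα.1 s hs).norm.aestronglyMeasurable ?_
    filter_upwards with x
    simpa using AddCircle.norm_le_half_period (p := (1 : ℝ)) (x := α s x) one_ne_zero
  have hbd : ∀ s ∈ S, ‖auxU (hmp s) (ham s) v - v‖ ≤ c := by
    intro s hs
    refine le_of_sq_le_sq ?_ hc.le
    rw [aux_normsq]
    calc ∫ x, ‖(auxU (hmp s) (ham s) v - v : Lp ℂ 2 μ) x‖ ^ 2 ∂μ
        ≤ ∫ x, 4 * Real.pi * ‖α s x‖ ∂μ := by
          refine integral_mono_of_nonneg (ae_of_all _ fun x => by positivity)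
            ((hαint s hs).const_mul _) ?_
          filter_upwards [Lp.coeFn_sub (auxU (hmp s) (ham s) v) v, auxU_coe (hmp s) (ham s) v,
            hv, (hmp s).quasiMeasurePreserving.ae hv, haα s hs] with x e1 e2 e3 e4 e5
          rw [e1, Pi.sub_apply, e2, e3, e4, e5, mul_one]
          exact aux_bound2 _
      _ = 4 * Real.pi * ∫ x, ‖α s x‖ ∂μ := integral_const_mul _ _
      _ ≤ 4 * Real.pi * (∑ s ∈ S, ∫ x, ‖α s x‖ ∂μ) := by
          gcongr
          exact Finset.single_le_sum (f := fun s => ∫ x, ‖α s x‖ ∂μ)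
            (fun i _ => integral_nonneg fun x => norm_nonneg _) hs
      _ ≤ 4 * Real.pi * (c ^ 2 / (4 * Real.pi)) := by gcongr
      _ = c ^ 2 := by field_simp
  obtain ⟨f, hf0, hf⟩ := hrep (Lp ℂ 2 μ) inferInstance inferInstance inferInstance
    (auxPi hmp h1 h2 ham hac) ⟨v, hv1, fun s hs => hbd s⁻¹ (hsym s hs)⟩
  have hfi : ∀ g, ∀ᵐ x ∂μ, f x = (AddCircle.toCircle (a g x) : ℂ) * f (T g x) := by
    intro g
    have e : auxU (hmp g) (ham g) f = f := by
      have := hf g⁻¹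
      have e' : auxPi hmp h1 h2 ham hac g⁻¹ f = auxU (hmp g⁻¹⁻¹) (ham g⁻¹⁻¹) f := rfl
      rw [e'] at this
      simpa only [inv_inv] using this
    have e2 := auxU_coe (hmp g) (ham g) f
    rwa [e] at e2
  have hfm : Measurable f := (Lp.stronglyMeasurable f).measurable
  have hfne : ∀ᵐ x ∂μ, f x ≠ 0 := by
    rcases aux_erg T μ hT hE {x | f x ≠ 0} (hfm (measurableSet_singleton 0).compl) (by
      intro g
      filter_upwards [hfi g] with x hx
      change f (T g x) ≠ 0 ↔ f x ≠ 0
      rw [hx, mul_ne_zero_iff]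
      exact ⟨fun h => ⟨Circle.coe_ne_zero _, h⟩, fun h => h.2⟩) with h | h
    · exact h
    · exfalso
      apply hf0
      apply Lp.ext
      filter_upwards [h, Lp.coeFn_zero ℂ 2 μ] with x hx h0
      rw [h0]
      simpa using hx
  let β : X → UnitAddCircle := fun x =>
    -((Complex.arg (f x) / (2 * Real.pi) : ℝ) : UnitAddCircle)
  have hβ : Measurable β :=
    ((AddCircle.measurable_mk' (a := (1 : ℝ))).comp
      ((Complex.measurable_arg.comp hfm).div_const _)).neg
  have hβa : ∀ g, ∀ᵐ x ∂μ, a g x = β (T g x) - β x := by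
    intro g
    filter_upwards [hfi g, hfne, (hmp g).quasiMeasurePreserving.ae hfne] with x hx h0 h0'
    have hn : ‖f x‖ = ‖f (T g x)‖ := by
      rw [hx, norm_mul, Circle.norm_coe, one_mul]
    have hnn : (‖f (T g x)‖ : ℂ) ≠ 0 := by simpa using h0'
    have e1 := aux_arg (f x)
    have e2 := aux_arg (f (T g x))
    have hx' := mul_left_cancel₀ hnn ((hn ▸ e1.symm).trans (hx.trans
      ((congrArg (fun z => (AddCircle.toCircle (a g x) : ℂ) * z) e2).trans
        (mul_left_comm _ _ _))))
    rw [← Circle.coe_mul, Circle.coe_inj, ← AddCircle.toCircle_add] at hx'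
    have := AddCircle.injective_toCircle one_ne_zero hx'
    simp only [β]
    rw [this]
    abel
  obtain ⟨b, hb⟩ := aux_K hT hE K hK β hβ (by
    intro g
    filter_upwards [hβa g] with x hx
    rw [← hx]
    exact hgood g x)
  classical
  have hKm : MeasurableSet {x | β x - b ∈ K} := (hβ.sub_const b) hK.measurableSet
  refine ⟨fun x => if β x - b ∈ K then β x - b else 0,
    Measurable.ite hKm (hβ.sub_const b) measurable_const, fun x => ?_, fun s hs => ?_⟩
  · dsimp only
    split_ifs with h
    · exact h
    · exact K.zero_mem
  · filter_upwards [haα s hs, hβa s, hb, (hmp s).quasiMeasurePreserving.ae hb] with x e1 e2 e3 e4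
    rw [if_pos e3, if_pos e4, ← e1, e2]
    abel
end

section
/- Let G = ⟨S⟩ be generated by a finite symmetric set S, with relations R, and suppose G has Kazhdan's property (T); let r > 0 be as in the coboundary theorem for property-(T) groups (any α ∈ Z^1(T,μ,K) with ‖α‖_{μ,S} ≤ r over an ergodic system is a coboundary). Then for every r' > 0 there exist ε > 0 and a finite subset F ⊆ R such that the following holds: for every ergodic measure-preserving G-action T on a standard probability space (X, μ), every closed subgroup K ≤ 𝕋, and every K-valued (F, ε)-near-cocycle α ∈ Z^1_{F,ε}(T, μ, K) with ‖α‖_{μ,S} ≤ r, there is β ∈ U(μ, K) with ‖α − dβ‖_{μ,S} < r'. -/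
open MeasureTheory Filter Topology
open scoped ENNReal

theorem countable_of_gen {G : Type*} [Group G] (S : Finset G)
    (hsym : ∀ s ∈ S, s⁻¹ ∈ S) (hgen : Subgroup.closure (S : Set G) = ⊤) : Countable G := by
  have : Function.Surjective (fun l : List {x // x ∈ S} => (l.map (fun s : {x // x ∈ S} => s.1)).prod) := by
    intro g
    have hg : g ∈ Subgroup.closure (S : Set G) := by rw [hgen]; trivial
    induction hg using Subgroup.closure_induction with
    | mem x hx => exact ⟨[⟨x, hx⟩], by simp⟩
    | one => exact ⟨[], by simp⟩
    | mul x y _ _ hx hy =>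
      obtain ⟨a, rfl⟩ := hx
      obtain ⟨b, rfl⟩ := hy
      exact ⟨a ++ b, by simp⟩
    | inv x _ hx =>
      obtain ⟨a, rfl⟩ := hx
      refine ⟨(a.map (fun s : {x // x ∈ S} =>
        (⟨s.1⁻¹, hsym _ s.2⟩ : {x // x ∈ S}))).reverse, ?_⟩
      beta_reduce
      rw [List.prod_inv_reverse, List.map_reverse, List.map_map, List.map_map]
      rfl
  exact this.countable

theorem erg_const {G : Type*} [Group G] [Countable G] {X : Type} [MeasurableSpace X]
    {μ : Measure X} [IsProbabilityMeasure μ] {T : G → X → X} (hT : IsMPAction T μ)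
    (hE : IsErgodicAction T μ) {f : X → ℂ} (hf : Measurable f)
    (hinv : ∀ g, f ∘ T g =ᵐ[μ] f) : ∃ a, f =ᵐ[μ] Function.const X a := by
  refine exists_eventuallyEq_const_of_forall_separating (l := ae μ) (fun U => MeasurableSet U) ?_
  intro U hU
  set A : Set X := ⋂ g, T g ⁻¹' (f ⁻¹' U) with hA
  have hAm : MeasurableSet A := MeasurableSet.iInter fun g => hT.1 g (hf hU)
  have hAi : ∀ g, T g ⁻¹' A = A := by
    intro g
    ext x
    simp only [hA, Set.mem_preimage, Set.mem_iInter]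
    have key : ∀ h, T h (T g x) = T (h * g) x := fun h => by rw [hT.2.2.2]; rfl
    simp only [key]
    constructor
    · intro H h
      simpa using H (h * g⁻¹)
    · intro H h
      exact H _
  have hall : ∀ᵐ x ∂μ, ∀ g, f (T g x) = f x := by
    rw [ae_all_iff]
    exact hinv
  have hiff : ∀ᵐ x ∂μ, (x ∈ A ↔ f x ∈ U) := by
    filter_upwards [hall] with x hx
    simp [hA, hx]
  rcases hE A hAm hAi with h | h
  · right
    have : ∀ᵐ x ∂μ, x ∉ A := measure_eq_zero_iff_ae_notMem.1 h
    filter_upwards [this, hiff] with x h1 h2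
    exact fun h3 => h1 (h2.2 h3)
  · left
    have : ∀ᵐ x ∂μ, x ∈ A := (mem_ae_iff_prob_eq_one hAm).2 h
    filter_upwards [this, hiff] with x h1 h2
    exact h2.1 h1

theorem gap_abstract {G : Type*} [Group G] {S : Finset G} {c : ℝ}
    (hc : ∀ (H : Type) (_ : NormedAddCommGroup H) (_ : InnerProductSpace ℂ H)
      (_ : CompleteSpace H),
      ∀ π : G →* (H ≃ₗᵢ[ℂ] H),
        (∃ v : H, ‖v‖ = 1 ∧ ∀ s ∈ S, ‖π s v - v‖ ≤ c) →
        ∃ w : H, w ≠ 0 ∧ ∀ g : G, π g w = w)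
    {H : Type} [NormedAddCommGroup H] [InnerProductSpace ℂ H] [CompleteSpace H]
    (π : G →* (H ≃ₗᵢ[ℂ] H)) (e : H) (he : ∀ g, π g e = e) (v : H) (hv : v ≠ 0)
    (hve : inner ℂ e v = 0) (hs : ∀ s ∈ S, ‖π s v - v‖ ≤ c * ‖v‖) :
    ∃ w : H, w ≠ 0 ∧ inner ℂ e w = 0 ∧ ∀ g, π g w = w := by
  let E : Submodule ℂ H := (ℂ ∙ e)ᗮ
  have hE : ∀ x, x ∈ E ↔ inner ℂ e x = 0 := fun x =>
    Submodule.mem_orthogonal_singleton_iff_inner_right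
  have hpres : ∀ g, ∀ x ∈ E, π g x ∈ E := by
    intro g x hx
    rw [hE] at hx ⊢
    rw [← hx]
    conv_lhs => rw [← he g]
    exact (π g).inner_map_map e x
  let L : G → (E ≃ₗᵢ[ℂ] E) := fun g =>
    { toFun := fun x => ⟨π g x, hpres g x x.2⟩
      invFun := fun x => ⟨π g⁻¹ x, hpres g⁻¹ x x.2⟩
      left_inv := by
        intro x
        ext
        change (π g⁻¹ * π g) (x : H) = x
        rw [← map_mul]; simp
      right_inv := by
        intro x
        ext
        change (π g * π g⁻¹) (x : H) = x
        rw [← map_mul]; simp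
      map_add' := by intro x y; ext; simp
      map_smul' := by intro x y; ext; simp
      norm_map' := by
        intro x
        change ‖π g (x : H)‖ = ‖(x : H)‖
        simp }
  have hL : ∀ g x, ((L g x : E) : H) = π g x := fun g x => rfl
  let ρ : G →* (E ≃ₗᵢ[ℂ] E) :=
    { toFun := L
      map_one' := by ext x; rw [hL]; simp
      map_mul' := by
        intro g h
        ext x
        rw [hL, map_mul]
        rfl }
  have hρ : ∀ g x, ((ρ g x : E) : H) = π g x := fun g x => rfl
  have hvn : 0 < ‖v‖ := norm_pos_iff.2 hv
  obtain ⟨w, hw0, hw⟩ := hc E inferInstance inferInstance inferInstance ρ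
    ⟨((‖v‖⁻¹ : ℝ) : ℂ) • ⟨v, (hE v).2 hve⟩, by
      rw [norm_smul]
      simp [hvn.ne'], by
      intro s hsS
      rw [map_smul, ← smul_sub, norm_smul]
      have h1 := hs s hsS
      have h2 : ‖ρ s ⟨v, (hE v).2 hve⟩ - ⟨v, (hE v).2 hve⟩‖ = ‖π s v - v‖ := rfl
      rw [h2, Complex.norm_real, norm_inv, norm_norm]
      rw [inv_mul_le_iff₀ hvn]
      linarith⟩
  refine ⟨w, by simpa using hw0, (hE _).1 w.2, fun g => ?_⟩
  rw [← hρ, hw]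

theorem norm_toLp_sq {X : Type} [MeasurableSpace X] {μ : Measure X} {f : X → ℂ}
    (hf : MemLp f 2 μ) : ‖hf.toLp f‖ ^ 2 = ∫ x, ‖f x‖ ^ 2 ∂μ := by
  have h := L2.inner_def (𝕜 := ℂ) (hf.toLp f) (hf.toLp f)
  rw [inner_self_eq_norm_sq_to_K] at h
  have h2 : ∫ a, inner ℂ (hf.toLp f a) (hf.toLp f a) ∂μ = ((∫ x, ‖f x‖ ^ 2 ∂μ : ℝ) : ℂ) := by
    rw [← integral_complex_ofReal]
    apply integral_congr_ae
    filter_upwards [hf.coeFn_toLp] with x hx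
    rw [hx, inner_self_eq_norm_sq_to_K]
    push_cast
    rfl
  rw [h2] at h
  apply Complex.ofReal_injective
  rw [← h]
  push_cast
  rfl

/-- Koopman representation. -/
noncomputable def koopman {G : Type*} [Group G] {X : Type} [MeasurableSpace X]
    {μ : Measure X} {T : G → X → X} (hT : IsMPAction T μ) :
    G →* (Lp ℂ 2 μ ≃ₗᵢ[ℂ] Lp ℂ 2 μ) :=
  have mp : ∀ g, MeasurePreserving (T g) μ μ := fun g => ⟨hT.1 g, hT.2.1 g⟩
  have comp : ∀ g h (F : Lp ℂ 2 μ), Lp.compMeasurePreserving (T h) (mp h)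
      (Lp.compMeasurePreserving (T g) (mp g) F) = Lp.compMeasurePreserving (T (g * h)) (mp _) F := by
    intro g h F
    rw [← Lp.compMeasurePreserving_comp_apply]
    congr 2
    exact (hT.2.2.2 g h).symm
  have one : ∀ F : Lp ℂ 2 μ, Lp.compMeasurePreserving (T 1) (mp 1) F = F := by
    intro F
    apply Lp.ext
    filter_upwards [Lp.coeFn_compMeasurePreserving F (mp 1)] with x hx
    rw [hx, hT.2.2.1]
    rfl
  have cancel : ∀ g h (F : Lp ℂ 2 μ), g * h = 1 → Lp.compMeasurePreserving (T h) (mp h)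
      (Lp.compMeasurePreserving (T g) (mp g) F) = F := by
    intro g h F e
    rw [comp]
    conv_rhs => rw [← one F]
    congr 2
    rw [e]
  { toFun := fun g =>
      { __ := Lp.compMeasurePreservingₗᵢ ℂ (T g⁻¹) (mp g⁻¹)
        invFun := Lp.compMeasurePreserving (T g) (mp g)
        left_inv := fun F => cancel _ _ F (by simp)
        right_inv := fun F => cancel _ _ F (by simp) }
    map_one' := by
      ext1 F
      change Lp.compMeasurePreserving (T 1⁻¹) (mp _) F = F
      conv_rhs => rw [← one F]
      congr 2
      simp
    map_mul' := by
      intro g h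
      ext1 F
      change Lp.compMeasurePreserving (T (g * h)⁻¹) (mp _) F =
        Lp.compMeasurePreserving (T g⁻¹) (mp _) (Lp.compMeasurePreserving (T h⁻¹) (mp _) F)
      rw [comp]
      congr 2
      simp }

theorem koopman_coe {G : Type*} [Group G] {X : Type} [MeasurableSpace X]
    {μ : Measure X} {T : G → X → X} (hT : IsMPAction T μ) (g : G) (F : Lp ℂ 2 μ) :
    (koopman hT g F : X → ℂ) =ᵐ[μ] F ∘ T g⁻¹ :=
  Lp.coeFn_compMeasurePreserving F ⟨hT.1 g⁻¹, hT.2.1 g⁻¹⟩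

theorem koopman_toLp {G : Type*} [Group G] {X : Type} [MeasurableSpace X]
    {μ : Measure X} {T : G → X → X} (hT : IsMPAction T μ) (g : G) {f : X → ℂ}
    (hf : MemLp f 2 μ) :
    (koopman hT g (hf.toLp f) : X → ℂ) =ᵐ[μ] f ∘ T g⁻¹ :=
  (koopman_coe hT g _).trans
    ((MeasurePreserving.mk (hT.1 g⁻¹) (hT.2.1 g⁻¹)).quasiMeasurePreserving.ae_eq_comp
      hf.coeFn_toLp)

theorem spectral_gap {G : Type*} [Group G] [Countable G] {S : Finset G} {c : ℝ} (hc0 : 0 < c)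
    (hc : ∀ (H : Type) (_ : NormedAddCommGroup H) (_ : InnerProductSpace ℂ H)
      (_ : CompleteSpace H),
      ∀ π : G →* (H ≃ₗᵢ[ℂ] H),
        (∃ v : H, ‖v‖ = 1 ∧ ∀ s ∈ S, ‖π s v - v‖ ≤ c) →
        ∃ w : H, w ≠ 0 ∧ ∀ g : G, π g w = w)
    {X : Type} [MeasurableSpace X]
    {μ : Measure X} [IsProbabilityMeasure μ] {T : G → X → X} (hT : IsMPAction T μ)
    (hE : IsErgodicAction T μ) {f : X → ℝ} (hf : Measurable f) {C : ℝ} (hC : ∀ x, |f x| ≤ C)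
    (hpos : 0 < ∫ x, (f x - ∫ y, f y ∂μ) ^ 2 ∂μ) :
    ∃ s ∈ S, c ^ 2 * ∫ x, (f x - ∫ y, f y ∂μ) ^ 2 ∂μ < ∫ x, (f (T s⁻¹ x) - f x) ^ 2 ∂μ := by
  by_contra! hcon
  set m := ∫ y, f y ∂μ with hm
  have hfi : Integrable f μ := Integrable.of_bound hf.aestronglyMeasurable C (Eventually.of_forall hC)
  set v : X → ℂ := fun x => ((f x - m : ℝ) : ℂ) with hv
  have hvm : Measurable v := by fun_prop
  have hvL : MemLp v 2 μ := by
    refine MemLp.of_bound hvm.aestronglyMeasurable (C + |m|) (Eventually.of_forall fun x => ?_)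
    rw [hv, Complex.norm_real, Real.norm_eq_abs]
    have := abs_sub (f x) m
    linarith [hC x]
  have h1L : MemLp (fun _ : X => (1 : ℂ)) 2 μ := memLp_const 1
  have hnorm : ‖hvL.toLp v‖ ^ 2 = ∫ x, (f x - m) ^ 2 ∂μ := by
    rw [norm_toLp_sq]
    congr 1
    ext x
    rw [hv, Complex.norm_real]
    simp
  obtain ⟨w, hw0, hwe, hw⟩ := gap_abstract hc (koopman hT) (h1L.toLp _) (by
      intro g
      apply Lp.ext
      filter_upwards [koopman_toLp hT g h1L, h1L.coeFn_toLp] with x h1 h2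
      rw [h1, h2]; rfl) (hvL.toLp v) (by
      intro h
      rw [h] at hnorm
      simp at hnorm
      linarith) (by
      rw [L2.inner_def]
      have : ∫ a, inner ℂ (h1L.toLp _ a) (hvL.toLp v a) ∂μ = ∫ x, v x ∂μ := by
        apply integral_congr_ae
        filter_upwards [h1L.coeFn_toLp, hvL.coeFn_toLp] with x h1 h2
        rw [h1, h2]
        simp
      rw [this, hv, integral_complex_ofReal, integral_sub hfi (integrable_const _)]
      simp [hm]) (by
      intro s hs
      have h1 := hcon s hs
      have hdL : MemLp (fun x => v (T s⁻¹ x) - v x) 2 μ :=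
        (hvL.comp_measurePreserving ⟨hT.1 s⁻¹, hT.2.1 s⁻¹⟩).sub hvL
      have h2 : koopman hT s (hvL.toLp v) - hvL.toLp v = hdL.toLp _ := by
        apply Lp.ext
        filter_upwards [koopman_toLp hT s hvL, hvL.coeFn_toLp, hdL.coeFn_toLp,
          Lp.coeFn_sub (koopman hT s (hvL.toLp v)) (hvL.toLp v)] with x h1 h2 h3 h4
        rw [h4, h3, Pi.sub_apply, h1, h2]; rfl
      have h3 : ‖hdL.toLp _‖ ^ 2 = ∫ x, (f (T s⁻¹ x) - f x) ^ 2 ∂μ := by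
        rw [norm_toLp_sq]
        congr 1
        ext x
        rw [hv]
        simp only
        rw [← Complex.ofReal_sub, Complex.norm_real]
        simp
      rw [h2]
      refine le_of_sq_le_sq ?_ (by positivity)
      rw [mul_pow, h3, hnorm]
      exact h1)
  obtain ⟨a, ha⟩ := erg_const hT hE (f := w) (Lp.stronglyMeasurable w).measurable (by
    intro g
    have h1 := koopman_coe hT g⁻¹ w
    rw [hw, inv_inv] at h1
    exact h1.symm)
  rw [L2.inner_def] at hwe
  have : ∫ x, inner ℂ (h1L.toLp _ x) (w x) ∂μ = a := by
    have : ∫ x, inner ℂ (h1L.toLp _ x) (w x) ∂μ = ∫ x, a ∂μ := by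
      apply integral_congr_ae
      filter_upwards [h1L.coeFn_toLp, ha] with x h1 h2
      rw [h1, h2]
      simp
    rw [this]; simp
  rw [this] at hwe
  subst hwe
  apply hw0
  apply Lp.ext
  filter_upwards [ha, Lp.coeFn_zero ℂ 2 μ] with x h1 h2
  rw [h1, h2]; rfl

theorem cint {Y : Type} [TopologicalSpace Y] [CompactSpace Y] [MeasurableSpace Y] [BorelSpace Y]
    {ν : Measure Y} [IsProbabilityMeasure ν] {f : Y → ℝ} (hf : Continuous f) :
    Integrable f ν := by
  obtain ⟨C, hC⟩ := (isCompact_range hf).isBounded.exists_norm_le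
  exact Integrable.of_bound hf.measurable.aestronglyMeasurable C
    (Eventually.of_forall fun x => hC _ ⟨x, rfl⟩)

theorem tint {Y : Type} [TopologicalSpace Y] [CompactSpace Y] [MeasurableSpace Y] [BorelSpace Y]
    {ι : Type*} {l : Filter ι} {μs : ι → ProbabilityMeasure Y} {ν : ProbabilityMeasure Y}
    (h : Tendsto μs l (𝓝 ν)) {f : Y → ℝ} (hf : Continuous f) :
    Tendsto (fun i => ∫ y, f y ∂(μs i : Measure Y)) l (𝓝 (∫ y, f y ∂(ν : Measure Y))) := by
  have := ProbabilityMeasure.tendsto_iff_forall_integral_tendsto.1 h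
    (BoundedContinuousFunction.mkOfCompact ⟨f, hf⟩)
  simpa using this

theorem limit_mp {G : Type*} [Group G] {Y : Type} [TopologicalSpace Y] [CompactSpace Y]
    [T2Space Y] [SecondCountableTopology Y] [MeasurableSpace Y] [BorelSpace Y]
    {ι : Type*} {l : Filter ι} [l.NeBot]
    {μs : ι → ProbabilityMeasure Y} {ν : ProbabilityMeasure Y}
    (h : Tendsto μs l (𝓝 ν)) {T : G → Y → Y} (hTc : ∀ g, Continuous (T g))
    (hmp : ∀ i, IsMPAction T (μs i : Measure Y)) : IsMPAction T (ν : Measure Y) := by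
  have hne : ∃ i : ι, True := (Eventually.of_forall (fun _ => trivial) : ∀ᶠ _ in l, True).exists
  obtain ⟨i0, -⟩ := hne
  refine ⟨fun g => (hTc g).measurable, fun g => ?_, (hmp i0).2.2.1, (hmp i0).2.2.2⟩
  have : IsProbabilityMeasure (Measure.map (T g) (ν : Measure Y)) :=
    Measure.isProbabilityMeasure_map (hTc g).measurable.aemeasurable
  apply ext_of_forall_integral_eq_of_IsFiniteMeasure
  intro f
  rw [integral_map (hTc g).measurable.aemeasurable f.continuous.measurable.aestronglyMeasurable]
  refine tendsto_nhds_unique (tint h (f.continuous.comp (hTc g))) ?_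
  refine (tint h f.continuous).congr fun i => ?_
  conv_lhs => rw [← (hmp i).2.1 g]
  rw [integral_map (hTc g).measurable.aemeasurable f.continuous.measurable.aestronglyMeasurable]

theorem var_eq {Y : Type} [TopologicalSpace Y] [CompactSpace Y] [MeasurableSpace Y] [BorelSpace Y]
    {ν : Measure Y} [IsProbabilityMeasure ν] {f : Y → ℝ} (hf : Continuous f) :
    ∫ x, (f x - ∫ y, f y ∂ν) ^ 2 ∂ν = ∫ x, f x ^ 2 ∂ν - (∫ y, f y ∂ν) ^ 2 := by
  set m := ∫ y, f y ∂ν with hm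
  have h1 : ∀ x, (f x - m) ^ 2 = f x ^ 2 - (2 * m * f x - m ^ 2) := fun x => by ring
  simp_rw [h1]
  rw [integral_sub (cint (by fun_prop)) (cint (by fun_prop)),
    integral_sub (cint (by fun_prop)) (integrable_const _), integral_const_mul, ← hm]
  simp
  ring

theorem limit_erg {G : Type*} [Group G] [Countable G] {S : Finset G} {c : ℝ} (hc0 : 0 < c)
    (hc : ∀ (H : Type) (_ : NormedAddCommGroup H) (_ : InnerProductSpace ℂ H)
      (_ : CompleteSpace H),
      ∀ π : G →* (H ≃ₗᵢ[ℂ] H),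
        (∃ v : H, ‖v‖ = 1 ∧ ∀ s ∈ S, ‖π s v - v‖ ≤ c) →
        ∃ w : H, w ≠ 0 ∧ ∀ g : G, π g w = w)
    {Y : Type} [TopologicalSpace Y] [CompactSpace Y]
    [T2Space Y] [SecondCountableTopology Y] [MeasurableSpace Y] [BorelSpace Y]
    {ι : Type*} {l : Filter ι} [l.NeBot]
    {μs : ι → ProbabilityMeasure Y} {ν : ProbabilityMeasure Y}
    (h : Tendsto μs l (𝓝 ν)) {T : G → Y → Y} (hTc : ∀ g, Continuous (T g))
    (hmp : ∀ i, IsMPAction T (μs i : Measure Y))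
    (herg : ∀ i, IsErgodicAction T (μs i : Measure Y)) : IsErgodicAction T (ν : Measure Y) := by
  have hν := limit_mp h hTc hmp
  intro A hA hAi
  by_contra! hcon
  obtain ⟨hA0, hA1⟩ := hcon
  set a : ℝ := (ν : Measure Y).real A with ha
  have ha0 : 0 < a := by
    rw [ha, measureReal_def]
    exact ENNReal.toReal_pos hA0 (measure_ne_top _ _)
  have ha1 : a < 1 := by
    refine lt_of_le_of_ne measureReal_le_one ?_
    intro he
    apply hA1
    rw [ha, measureReal_def] at he
    rw [← ENNReal.ofReal_toReal (measure_ne_top (ν : Measure Y) A), he]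
    simp
  set χ : Y → ℝ := A.indicator 1 with hχ
  have hχm : Measurable χ := measurable_one.indicator hA
  have hχb : ∀ y, |χ y| ≤ 1 := by
    intro y
    by_cases hy : y ∈ A <;> simp [hχ, hy]
  have hχL : MemLp χ (ENNReal.ofReal 2) (ν : Measure Y) :=
    MemLp.of_bound hχm.aestronglyMeasurable 1 (Eventually.of_forall hχb)
  have hden : 0 < 4 * (4 * (S.card : ℝ) + c ^ 2) := by positivity
  set δ : ℝ := c ^ 2 * (a * (1 - a)) / (4 * (4 * (S.card : ℝ) + c ^ 2)) with hδ
  have haa : 0 < a * (1 - a) := mul_pos ha0 (by linarith)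
  have hδ0 : 0 < δ := by positivity
  obtain ⟨g, hg, -⟩ := hχL.exists_boundedContinuous_integral_rpow_sub_le (by norm_num) hδ0
  have hgc : Continuous g := g.continuous
  have hg' : ∫ y, (χ y - g y) ^ 2 ∂(ν : Measure Y) ≤ δ := by
    refine le_trans (le_of_eq ?_) hg
    congr 1
    ext y
    rw [Real.rpow_two]
    simp
  obtain ⟨C, hC⟩ := (isCompact_range hgc).isBounded.exists_norm_le
  have hC' : ∀ y, |g y| ≤ C := fun y => hC _ ⟨y, rfl⟩
  -- integrability of bounded things
  have hbi : ∀ (u v : Y → ℝ), Measurable u → Measurable v → (∃ B, ∀ y, |u y| ≤ B) →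
      (∃ B, ∀ y, |v y| ≤ B) → Integrable (fun y => (u y - v y) ^ 2) (ν : Measure Y) := by
    rintro u v hu hv ⟨B, hB⟩ ⟨B', hB'⟩
    refine Integrable.of_bound ((hu.sub hv).pow_const 2).aestronglyMeasurable ((B + B') ^ 2)
      (Eventually.of_forall fun y => ?_)
    rw [Real.norm_eq_abs, abs_pow]
    have := abs_sub (u y) (v y)
    gcongr
    linarith [hB y, hB' y]
  have hgm : Measurable g := hgc.measurable
  have hcg : Integrable (fun y => (χ y - g y) ^ 2) (ν : Measure Y) :=
    hbi _ _ hχm hgm ⟨1, hχb⟩ ⟨C, hC'⟩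
  -- lower bound of the variance of `g`
  set m := ∫ y, g y ∂(ν : Measure Y) with hm
  have hV : a * (1 - a) ≤ 2 * δ + 2 * ∫ y, (g y - m) ^ 2 ∂(ν : Measure Y) := by
    have e1 : ∫ y, (χ y - m) ^ 2 ∂(ν : Measure Y) = (1 - 2 * m) * a + m ^ 2 := by
      have : ∀ y, (χ y - m) ^ 2 = (1 - 2 * m) * χ y + m ^ 2 := by
        intro y
        by_cases hy : y ∈ A <;> simp [hχ, hy]
        ring
      simp_rw [this]
      rw [integral_add ((Integrable.of_bound hχm.aestronglyMeasurable 1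
        (Eventually.of_forall hχb)).const_mul _) (integrable_const _), integral_const_mul, hχ,
        integral_indicator_one hA]
      simp [ha]
    have e2 : ∫ y, (χ y - m) ^ 2 ∂(ν : Measure Y) ≤
        ∫ y, (2 * (χ y - g y) ^ 2 + 2 * (g y - m) ^ 2) ∂(ν : Measure Y) := by
      apply integral_mono (hbi _ _ hχm measurable_const ⟨1, hχb⟩ ⟨|m|, fun _ => le_rfl⟩)
      · exact (hcg.const_mul 2).add ((cint (by fun_prop)).const_mul 2)
      · intro y
        dsimp only
        nlinarith [sq_nonneg ((χ y - g y) - (g y - m))]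
    rw [integral_add (hcg.const_mul 2) ((cint (by fun_prop)).const_mul 2), integral_const_mul,
      integral_const_mul, e1] at e2
    nlinarith [sq_nonneg (m - a)]
  have hQs : ∀ s, ∫ y, (g (T s⁻¹ y) - g y) ^ 2 ∂(ν : Measure Y) ≤ 4 * δ := by
    intro s
    have hTm := hTc s⁻¹
    have e0 : ∀ y, χ (T s⁻¹ y) = χ y := by
      intro y
      have : T s⁻¹ y ∈ A ↔ y ∈ A := by
        conv_rhs => rw [← hAi s⁻¹]
        rfl
      by_cases hy : y ∈ A <;> simp [hχ, this, hy]
    have hi1 : Integrable (fun y => (χ (T s⁻¹ y) - g (T s⁻¹ y)) ^ 2) (ν : Measure Y) :=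
      hbi _ _ (hχm.comp hTm.measurable) (hgm.comp hTm.measurable) ⟨1, fun y => hχb _⟩
        ⟨C, fun y => hC' _⟩
    have e1 : ∫ y, (χ (T s⁻¹ y) - g (T s⁻¹ y)) ^ 2 ∂(ν : Measure Y) =
        ∫ y, (χ y - g y) ^ 2 ∂(ν : Measure Y) := by
      conv_rhs => rw [← hν.2.1 s⁻¹]
      rw [integral_map hTm.measurable.aemeasurable
        (f := fun y => (χ y - g y) ^ 2) ((hχm.sub hgm).pow_const 2).aestronglyMeasurable]
    have e2 : ∫ y, (g (T s⁻¹ y) - g y) ^ 2 ∂(ν : Measure Y) ≤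
        ∫ y, (2 * (χ (T s⁻¹ y) - g (T s⁻¹ y)) ^ 2 + 2 * (χ y - g y) ^ 2) ∂(ν : Measure Y) := by
      apply integral_mono (cint (by fun_prop))
      · exact (hi1.const_mul 2).add (hcg.const_mul 2)
      · intro y
        dsimp only
        rw [e0]
        nlinarith [sq_nonneg ((χ y - g (T s⁻¹ y)) + (χ y - g y))]
    rw [integral_add (hi1.const_mul 2) (hcg.const_mul 2), integral_const_mul,
      integral_const_mul, e1] at e2
    linarith
  -- limit of spectral gap inequality
  have hineq : ∀ i, c ^ 2 * (∫ y, g y ^ 2 ∂(μs i : Measure Y) - (∫ y, g y ∂(μs i : Measure Y)) ^ 2)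
      ≤ ∑ s ∈ S, ∫ y, (g (T s⁻¹ y) - g y) ^ 2 ∂(μs i : Measure Y) := by
    intro i
    rw [← var_eq hgc]
    have hnn : ∀ s ∈ S, 0 ≤ ∫ y, (g (T s⁻¹ y) - g y) ^ 2 ∂(μs i : Measure Y) :=
      fun s _ => integral_nonneg fun y => sq_nonneg _
    by_cases hpos : 0 < ∫ x, (g x - ∫ y, g y ∂(μs i : Measure Y)) ^ 2 ∂(μs i : Measure Y)
    · obtain ⟨s, hs, hlt⟩ := spectral_gap hc0 hc (hmp i) (herg i) hgm hC' hpos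
      exact hlt.le.trans (Finset.single_le_sum hnn hs)
    · exact le_trans (mul_nonpos_of_nonneg_of_nonpos (by positivity) (not_lt.1 hpos))
        (Finset.sum_nonneg hnn)
  have hlim := le_of_tendsto_of_tendsto'
    (((tint h (f := fun y => g y ^ 2) (hgc.pow 2)).sub ((tint h hgc).pow 2)).const_mul (c ^ 2))
    (tendsto_finsetSum S fun s _ => tint h (f := fun y => (g (T s⁻¹ y) - g y) ^ 2)
      (((hgc.comp (hTc s⁻¹)).sub hgc).pow 2)) hineq
  rw [← var_eq hgc] at hlim
  have hfin : ∑ s ∈ S, ∫ y, (g (T s⁻¹ y) - g y) ^ 2 ∂(ν : Measure Y) ≤ S.card * (4 * δ) := by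
    have := Finset.sum_le_card_nsmul S _ (4 * δ) (fun s _ => hQs s)
    simpa using this
  have hδe : δ * (4 * (4 * (S.card : ℝ) + c ^ 2)) = c ^ 2 * (a * (1 - a)) := by
    rw [hδ]; field_simp
  rw [← hm] at hlim
  have hk := mul_le_mul_of_nonneg_left hV (sq_nonneg c)
  have hp : 0 < c ^ 2 * (a * (1 - a)) := by positivity
  nlinarith [hlim, hfin, hk, hδe, hp]

theorem rounding {K : AddSubgroup UnitAddCircle} {δ : ℝ} (hδ : 0 < δ) :
    ∃ ρ : UnitAddCircle → UnitAddCircle, Measurable ρ ∧ (∀ t, ρ t ∈ K) ∧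
      ∀ t, ‖t - ρ t‖ ≤ Metric.infDist t K + δ := by
  classical
  let d : ℕ → K := TopologicalSpace.denseSeq K
  have hd : DenseRange d := TopologicalSpace.denseRange_denseSeq K
  have hex : ∀ t : UnitAddCircle, ∃ n, ‖t - d n‖ < Metric.infDist t K + δ := by
    intro t
    obtain ⟨k, hk, hlt⟩ := (Metric.infDist_lt_iff (s := (K : Set UnitAddCircle)) (x := t)
      (r := Metric.infDist t K + δ) ⟨0, K.zero_mem⟩).1 (by linarith)
    have ho : IsOpen {x : K | ‖t - x‖ < Metric.infDist t K + δ} :=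
      isOpen_lt (by fun_prop) continuous_const
    obtain ⟨n, hn⟩ := hd.exists_mem_open ho ⟨⟨k, hk⟩, by
      simpa [dist_eq_norm] using hlt⟩
    exact ⟨n, hn⟩
  refine ⟨fun t => d (Nat.find (hex t)), ?_, fun t => (d _).2, fun t => (Nat.find_spec (hex t)).le⟩
  have h1 : Measurable fun t => Nat.find (hex t) := by
    apply measurable_find
    intro k
    exact (isOpen_lt (by fun_prop) ((Metric.continuous_infDist_pt _).add continuous_const)).measurableSet
  exact (measurable_from_top (f := fun n => ((d n : K) : UnitAddCircle))).comp h1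

theorem cont_approx {Y : Type} [TopologicalSpace Y] [CompactSpace Y]
    [T2Space Y] [SecondCountableTopology Y] [MeasurableSpace Y] [BorelSpace Y]
    {ν : Measure Y} [IsProbabilityMeasure ν] {β : Y → UnitAddCircle} (hβ : Measurable β)
    {δ : ℝ} (hδ : 0 < δ) :
    ∃ β' : Y → UnitAddCircle, Continuous β' ∧ ∫ y, ‖β y - β' y‖ ∂ν ≤ δ := by
  let b : Y → ℝ := fun y => (AddCircle.measurableEquivIoc 1 0 (β y) : ℝ)
  have hb : Measurable b :=
    measurable_subtype_coe.comp ((AddCircle.measurableEquivIoc 1 0).measurable.comp hβ)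
  have hbβ : ∀ y, ((b y : ℝ) : UnitAddCircle) = β y := fun y =>
    (AddCircle.measurableEquivIoc 1 0).symm_apply_apply (β y)
  have hbb : ∀ y, ‖b y‖ ≤ 1 := by
    intro y
    have := (AddCircle.measurableEquivIoc (1 : ℝ) 0 (β y)).2
    rw [Real.norm_eq_abs, abs_le]
    constructor
    · linarith [this.1]
    · linarith [this.2]
  have hbi : Integrable b ν := Integrable.of_bound hb.aestronglyMeasurable 1
    (Eventually.of_forall hbb)
  obtain ⟨g, hg, hgi⟩ := hbi.exists_boundedContinuous_integral_sub_le hδ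
  have hgc : Continuous fun y => ((g y : ℝ) : UnitAddCircle) :=
    (AddCircle.continuous_mk' 1).comp g.continuous
  refine ⟨fun y => ((g y : ℝ) : UnitAddCircle), hgc, le_trans ?_ hg⟩
  have hle : ∀ y, ‖β y - ((g y : ℝ) : UnitAddCircle)‖ ≤ ‖b y - g y‖ := by
    intro y
    rw [← hbβ, ← AddCircle.coe_sub]
    exact QuotientAddGroup.norm_mk_le_norm
  refine integral_mono_of_nonneg (Eventually.of_forall fun y => norm_nonneg _) (hbi.sub hgi).norm
    (Eventually.of_forall hle)

theorem infDist_sub_le (K : AddSubgroup UnitAddCircle) (x y : UnitAddCircle) :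
    Metric.infDist (x - y) K ≤ Metric.infDist x K + Metric.infDist y K := by
  have hne : (K : Set UnitAddCircle).Nonempty := ⟨0, K.zero_mem⟩
  refine le_of_forall_pos_le_add fun ε hε => ?_
  obtain ⟨k, hk, hxk⟩ := (Metric.infDist_lt_iff (x := x) hne
    (r := Metric.infDist x K + ε / 2)).1 (by linarith)
  obtain ⟨k', hk', hyk⟩ := (Metric.infDist_lt_iff (x := y) hne
    (r := Metric.infDist y K + ε / 2)).1 (by linarith)
  have h1 : Metric.infDist (x - y) K ≤ dist (x - y) (k - k') :=
    Metric.infDist_le_dist_of_mem (K.sub_mem hk hk')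
  have h2 := dist_sub_sub_le x y k k'
  linarith

theorem limit_subgroup {ι : Type*} {l : Filter ι} [l.NeBot]
    {Ks : ι → TopologicalSpace.NonemptyCompacts UnitAddCircle}
    {L : TopologicalSpace.NonemptyCompacts UnitAddCircle}
    (h : Tendsto Ks l (𝓝 L)) (K : ι → AddSubgroup UnitAddCircle)
    (hK : ∀ i, (Ks i : Set UnitAddCircle) = K i) :
    ∃ K' : AddSubgroup UnitAddCircle, (K' : Set UnitAddCircle) = L ∧
      IsClosed (K' : Set UnitAddCircle) ∧
      ∀ δ : ℝ, 0 < δ → ∀ᶠ i in l, ∀ t : UnitAddCircle, Metric.infDist t (K i) ≤ Metric.infDist t K' + δ ∧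
        Metric.infDist t K' ≤ Metric.infDist t (K i) + δ := by
  have hd : ∀ δ : ℝ, 0 < δ → ∀ᶠ i in l, ∀ t,
      Metric.infDist t (K i) ≤ Metric.infDist t (L : Set UnitAddCircle) + δ ∧
        Metric.infDist t (L : Set UnitAddCircle) ≤ Metric.infDist t (K i) + δ := by
    intro δ hδ
    have hm := (Metric.tendsto_nhds.1 h) δ hδ
    filter_upwards [hm] with i hi t
    rw [Metric.NonemptyCompacts.dist_eq] at hi
    have hfin : Metric.hausdorffEDist (Ks i : Set UnitAddCircle) L ≠ ⊤ :=
      Metric.hausdorffEDist_ne_top_of_nonempty_of_bounded (Ks i).nonempty L.nonempty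
        (Ks i).isCompact.isBounded L.isCompact.isBounded
    have h1 := Metric.infDist_le_infDist_add_hausdorffDist (x := t) hfin
    have h2 := Metric.infDist_le_infDist_add_hausdorffDist (x := t)
      (s := (L : Set UnitAddCircle)) (t := (Ks i : Set UnitAddCircle))
      (by rwa [Metric.hausdorffEDist_comm])
    rw [Metric.hausdorffDist_comm] at h2
    rw [← hK]
    constructor <;> linarith
  have hLc : IsClosed (L : Set UnitAddCircle) := L.isCompact.isClosed
  have hmem : ∀ t, (∀ δ : ℝ, 0 < δ → Metric.infDist t (L : Set UnitAddCircle) ≤ δ) →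
      t ∈ (L : Set UnitAddCircle) := by
    intro t ht
    rw [hLc.mem_iff_infDist_zero L.nonempty]
    exact le_antisymm (le_of_forall_pos_le_add fun ε hε => by simpa using ht ε hε)
      Metric.infDist_nonneg
  have hsub : ∀ x ∈ (L : Set UnitAddCircle), ∀ y ∈ (L : Set UnitAddCircle),
      x - y ∈ (L : Set UnitAddCircle) := by
    intro x hx y hy
    apply hmem
    intro δ hδ
    obtain ⟨i, hi⟩ := (hd (δ / 3) (by positivity)).exists
    have h1 := (hi x).1
    have h2 := (hi y).1
    have h3 := (hi (x - y)).2
    have h4 := infDist_sub_le (K i) x y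
    rw [Metric.infDist_zero_of_mem hx] at h1
    rw [Metric.infDist_zero_of_mem hy] at h2
    linarith
  obtain ⟨x0, hx0⟩ := L.nonempty
  have hzero : (0 : UnitAddCircle) ∈ (L : Set UnitAddCircle) := by
    simpa using hsub x0 hx0 x0 hx0
  have hneg : ∀ x ∈ (L : Set UnitAddCircle), -x ∈ (L : Set UnitAddCircle) := fun x hx => by
    simpa using hsub 0 hzero x hx
  refine ⟨{ carrier := L, zero_mem' := hzero, neg_mem' := fun {x} hx => hneg x hx,
            add_mem' := fun {x y} hx hy => by simpa using hsub x hx (-y) (hneg y hy) },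
    rfl, hLc, hd⟩

theorem nint {Y : Type} [MeasurableSpace Y] {μ : Measure Y} [IsProbabilityMeasure μ]
    {f : Y → UnitAddCircle} (hf : Measurable f) : Integrable (fun y => ‖f y‖) μ := by
  obtain ⟨C, hC⟩ := (isCompact_univ (X := UnitAddCircle)).isBounded.exists_norm_le
  exact Integrable.of_bound hf.norm.aestronglyMeasurable C
    (Eventually.of_forall fun x => by simpa using hC (f x) trivial)

theorem cs_cont {G : Type*} [Group G] {Y : Type} [TopologicalSpace Y] {T : G → Y → Y}
    (hTc : ∀ g, Continuous (T g)) {a : G → Y → UnitAddCircle} (ha : ∀ s, Continuous (a s))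
    (w : List G) : Continuous (cocycleSum T a w) := by
  induction w with
  | nil => exact continuous_const
  | cons s w ih => exact ih.add ((ha s).comp (hTc _))

theorem cs_congr {G : Type*} [Group G] {Y : Type} [MeasurableSpace Y] {μ : Measure Y}
    {T : G → Y → Y} (hT : IsMPAction T μ) {S : Finset G} {a b : G → Y → UnitAddCircle}
    (hab : ∀ s ∈ S, a s =ᵐ[μ] b s) (w : List G) (hw : ∀ s ∈ w, s ∈ S) :
    cocycleSum T a w =ᵐ[μ] cocycleSum T b w := by
  induction w with
  | nil => exact EventuallyEq.rfl
  | cons s w ih =>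
    have h1 := ih (fun t ht => hw t (List.mem_cons_of_mem _ ht))
    have h2 : a s ∘ T w.prod =ᵐ[μ] b s ∘ T w.prod :=
      (MeasurePreserving.mk (hT.1 w.prod) (hT.2.1 w.prod)).quasiMeasurePreserving.ae_eq_comp
        (hab s (hw s (by simp)))
    filter_upwards [h1, h2] with y h1 h2
    change cocycleSum T a w y + a s (T w.prod y) = cocycleSum T b w y + b s (T w.prod y)
    rw [h1]
    exact congrArg _ h2

theorem mp_int {G : Type*} [Group G] {Y : Type} [MeasurableSpace Y] {μ : Measure Y}
    {T : G → Y → Y} (hT : IsMPAction T μ) (g : G) {f : Y → ℝ} (hf : Measurable f) :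
    ∫ y, f (T g y) ∂μ = ∫ y, f y ∂μ := by
  conv_rhs => rw [← hT.2.1 g]
  rw [integral_map (hT.1 g).aemeasurable hf.aestronglyMeasurable]

theorem main_compact {G : Type*} [Group G] [Countable G] (S : Finset G)
    (hT : HasPropertyT G S) (r : ℝ)
    {Y : Type} [TopologicalSpace Y] [CompactSpace Y]
    [T2Space Y] [SecondCountableTopology Y] [MeasurableSpace Y] [BorelSpace Y]
    {T : G → Y → Y} (hTc : ∀ g, Continuous (T g))
    {a : G → Y → UnitAddCircle} (ha : ∀ s, Continuous (a s))
    (hcob : ∀ μ : Measure Y, IsProbabilityMeasure μ → IsMPAction T μ → IsErgodicAction T μ →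
        ∀ K : AddSubgroup UnitAddCircle, IsClosed (K : Set UnitAddCircle) →
          ∀ α : G → Y → UnitAddCircle, IsCocycle S T μ K α →
            (∑ s ∈ S, ∫ x, ‖α s x‖ ∂μ) ≤ r →
            ∃ β : Y → UnitAddCircle, Measurable β ∧ (∀ x, β x ∈ K) ∧
              ∀ s ∈ S, ∀ᵐ x ∂μ, α s x = β (T s x) - β x)
    (r' : ℝ) (hr' : 0 < r') :
    ∃ (ε : ℝ) (F : Finset (List G)), 0 < ε ∧
      (∀ w ∈ F, (∀ s ∈ w, s ∈ S) ∧ w.prod = 1) ∧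
      ∀ μ : Measure Y, IsProbabilityMeasure μ → IsMPAction T μ → IsErgodicAction T μ →
        ∀ K : AddSubgroup UnitAddCircle, IsClosed (K : Set UnitAddCircle) →
          (∀ s ∈ S, ∀ᵐ y ∂μ, a s y ∈ K) →
          (∀ w ∈ F, (∫ x, ‖cocycleSum T a w x‖ ∂μ) < ε) →
          (∑ s ∈ S, ∫ x, ‖a s x‖ ∂μ) ≤ r →
          ∃ β : Y → UnitAddCircle, Measurable β ∧ (∀ x, β x ∈ K) ∧
            (∑ s ∈ S, ∫ x, ‖a s x - (β (T s x) - β x)‖ ∂μ) < r' := by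
  classical
  obtain ⟨c, hc0, hc⟩ := hT
  by_contra hcon
  let Rel := {w : List G // (∀ s ∈ w, s ∈ S) ∧ w.prod = 1}
  have hbad : ∀ i : ℕ × Finset Rel, ∃ (μ : ProbabilityMeasure Y) (K : AddSubgroup UnitAddCircle),
      IsMPAction T (μ : Measure Y) ∧ IsErgodicAction T (μ : Measure Y) ∧
      IsClosed (K : Set UnitAddCircle) ∧ (∀ s ∈ S, ∀ᵐ y ∂(μ : Measure Y), a s y ∈ K) ∧
      (∀ w ∈ i.2, (∫ x, ‖cocycleSum T a w.1 x‖ ∂(μ : Measure Y)) < 1 / ((i.1 : ℝ) + 1)) ∧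
      (∑ s ∈ S, ∫ x, ‖a s x‖ ∂(μ : Measure Y)) ≤ r ∧
      ∀ β : Y → UnitAddCircle, Measurable β → (∀ x, β x ∈ K) →
        r' ≤ (∑ s ∈ S, ∫ x, ‖a s x - (β (T s x) - β x)‖ ∂(μ : Measure Y)) := by
    intro i
    by_contra hno
    apply hcon
    refine ⟨1 / ((i.1 : ℝ) + 1), i.2.map (Function.Embedding.subtype _), by positivity, ?_, ?_⟩
    · intro w hw
      obtain ⟨v, -, rfl⟩ := Finset.mem_map.1 hw
      exact v.2
    · intro μ hμ h1 h2 K h3 h4 h5 h6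
      by_contra hnb
      apply hno
      refine ⟨⟨μ, hμ⟩, K, h1, h2, h3, h4, ?_, h6, ?_⟩
      · intro w hw
        exact h5 w.1 (Finset.mem_map.2 ⟨w, hw, rfl⟩)
      · intro β hβ hβK
        by_contra hlt
        exact hnb ⟨β, hβ, hβK, not_le.1 hlt⟩
  choose μ K hmp herg hKc haK hrel hsum hno using hbad
  let U : Ultrafilter (ℕ × Finset Rel) := Ultrafilter.of atTop
  have hU : (U : Filter (ℕ × Finset Rel)) ≤ atTop := Ultrafilter.of_le _
  obtain ⟨ν, -, hν⟩ := isCompact_univ.ultrafilter_le_nhds (U.map μ) (by simp)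
  have hν : Tendsto μ U (𝓝 ν) := hν
  let Ks : ℕ × Finset Rel → TopologicalSpace.NonemptyCompacts UnitAddCircle := fun i =>
    ⟨⟨(K i : Set UnitAddCircle), (hKc i).isCompact⟩, ⟨0, (K i).zero_mem⟩⟩
  obtain ⟨L, -, hL⟩ := isCompact_univ.ultrafilter_le_nhds (U.map Ks) (by simp)
  have hL : Tendsto Ks U (𝓝 L) := hL
  obtain ⟨K', -, hK'c, hK'⟩ := limit_subgroup hL K (fun i => rfl)
  have hνmp := limit_mp hν hTc hmp
  have hνerg := limit_erg hc0 hc hν hTc hmp herg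
  have hK'ne : (K' : Set UnitAddCircle).Nonempty := ⟨0, K'.zero_mem⟩
  have hD : Continuous fun t : UnitAddCircle => Metric.infDist t (K' : Set UnitAddCircle) :=
    Metric.continuous_infDist_pt _
  -- the limit cochain is `K'`-valued
  have haK' : ∀ s ∈ S, ∀ᵐ y ∂(ν : Measure Y), a s y ∈ K' := by
    intro s hs
    have hcont : Continuous fun y => Metric.infDist (a s y) (K' : Set UnitAddCircle) :=
      hD.comp (ha s)
    have h0 : ∫ y, Metric.infDist (a s y) (K' : Set UnitAddCircle) ∂(ν : Measure Y) ≤ 0 := by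
      refine le_of_forall_pos_le_add fun δ hδ => ?_
      refine le_of_tendsto (tint hν hcont) ?_
      filter_upwards [hK' δ hδ] with i hi
      have : ∫ y, Metric.infDist (a s y) (K' : Set UnitAddCircle) ∂(μ i : Measure Y) ≤
          ∫ y, δ ∂(μ i : Measure Y) := by
        apply integral_mono_ae (cint hcont) (integrable_const _)
        filter_upwards [haK i s hs] with y hy
        have := (hi (a s y)).2
        rw [Metric.infDist_zero_of_mem (s := (K i : Set UnitAddCircle)) hy] at this
        linarith
      simpa using this
    have h1 := (integral_eq_zero_iff_of_nonneg (fun y => Metric.infDist_nonneg) (cint hcont)).1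
      (le_antisymm h0 (integral_nonneg fun y => Metric.infDist_nonneg))
    filter_upwards [h1] with y hy
    exact (hK'c.mem_iff_infDist_zero hK'ne).2 hy
  -- the limit cochain is a cocycle
  have hcoc : ∀ w : List G, (∀ s ∈ w, s ∈ S) → w.prod = 1 →
      ∀ᵐ y ∂(ν : Measure Y), cocycleSum T a w y = 0 := by
    intro w hw1 hw2
    have hcont : Continuous fun y => ‖cocycleSum T a w y‖ := (cs_cont hTc ha w).norm
    have h0 : ∫ y, ‖cocycleSum T a w y‖ ∂(ν : Measure Y) ≤ 0 := by
      refine le_of_forall_pos_le_add fun δ hδ => ?_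
      refine le_of_tendsto (tint hν hcont) ?_
      obtain ⟨n, hn⟩ := exists_nat_one_div_lt hδ
      have hev : ∀ᶠ i in (U : Filter (ℕ × Finset Rel)), (n, {⟨w, hw1, hw2⟩}) ≤ i :=
        hU (eventually_ge_atTop _)
      filter_upwards [hev] with i hi
      have h1 := hrel i ⟨w, hw1, hw2⟩ (hi.2 (Finset.mem_singleton_self _))
      have h2 : 1 / ((i.1 : ℝ) + 1) ≤ 1 / ((n : ℝ) + 1) := by
        apply one_div_le_one_div_of_le (by positivity)
        have : (n : ℝ) ≤ i.1 := by exact_mod_cast hi.1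
        linarith
      simp only at h1
      linarith
    have h1 := (integral_eq_zero_iff_of_nonneg (fun y => norm_nonneg _) (cint hcont)).1
      (le_antisymm h0 (integral_nonneg fun y => norm_nonneg _))
    filter_upwards [h1] with y hy
    exact norm_eq_zero.1 hy
  have hsumν : (∑ s ∈ S, ∫ x, ‖a s x‖ ∂(ν : Measure Y)) ≤ r :=
    le_of_tendsto' (tendsto_finsetSum S fun s _ => tint hν (ha s).norm) hsum
  let α : G → Y → UnitAddCircle := fun s y => if a s y ∈ K' then a s y else 0
  have hαa : ∀ s ∈ S, α s =ᵐ[(ν : Measure Y)] a s := by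
    intro s hs
    filter_upwards [haK' s hs] with y hy
    simp [α, hy]
  obtain ⟨β, hβm, hβK, hβ⟩ := hcob ν inferInstance hνmp hνerg K' hK'c α ⟨by
      intro s hs
      exact Measurable.ite ((ha s).measurable hK'c.measurableSet) (ha s).measurable
        measurable_const, by
      intro s hs y
      by_cases hy : a s y ∈ K'
      · simp [α, hy]
      · simp [α, hy], by
      intro w hw1 hw2
      filter_upwards [hcoc w hw1 hw2, cs_congr hνmp hαa w hw1] with y h1 h2
      rw [h2, h1]⟩ (by
      refine le_trans (le_of_eq ?_) hsumν
      refine Finset.sum_congr rfl fun s hs => integral_congr_ae ?_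
      filter_upwards [hαa s hs] with y hy
      rw [hy])
  set N : ℝ := (S.card : ℝ) with hN
  have hN0 : 0 ≤ N := Nat.cast_nonneg _
  set δ : ℝ := r' / (10 * N + 2) with hδ
  have hδ0 : 0 < δ := by positivity
  have hδe : δ * (10 * N + 2) = r' := by rw [hδ]; field_simp
  obtain ⟨b, hbc, hb⟩ := cont_approx (ν := (ν : Measure Y)) hβm hδ0
  have hbm : Measurable b := hbc.measurable
  -- first estimate
  have hA : (∑ s ∈ S, ∫ y, ‖a s y - (b (T s y) - b y)‖ ∂(ν : Measure Y)) ≤ N * (2 * δ) := by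
    have hs : ∀ s ∈ S, ∫ y, ‖a s y - (b (T s y) - b y)‖ ∂(ν : Measure Y) ≤ 2 * δ := by
      intro s hs
      have hm1 : Measurable fun y => β y - b y := hβm.sub hbm
      have hi1 : Integrable (fun y => ‖β (T s y) - b (T s y)‖) (ν : Measure Y) :=
        nint (hm1.comp (hνmp.1 s))
      have hi2 : Integrable (fun y => ‖β y - b y‖) (ν : Measure Y) := nint hm1
      have e1 : ∫ y, ‖β (T s y) - b (T s y)‖ ∂(ν : Measure Y) =
          ∫ y, ‖β y - b y‖ ∂(ν : Measure Y) :=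
        mp_int hνmp s (f := fun y => ‖β y - b y‖) hm1.norm
      have e2 : ∫ y, ‖a s y - (b (T s y) - b y)‖ ∂(ν : Measure Y) ≤
          ∫ y, (‖β (T s y) - b (T s y)‖ + ‖β y - b y‖) ∂(ν : Measure Y) := by
        apply integral_mono_ae
          (cint ((ha s).sub ((hbc.comp (hTc s)).sub hbc)).norm) (hi1.add hi2)
        filter_upwards [hβ s hs, hαa s hs] with y h1 h2
        rw [h2] at h1
        have : a s y - (b (T s y) - b y) = (β (T s y) - b (T s y)) - (β y - b y) := by
          rw [h1]; abel
        change ‖a s y - (b (T s y) - b y)‖ ≤ ‖β (T s y) - b (T s y)‖ + ‖β y - b y‖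
        rw [this]
        exact norm_sub_le _ _
      rw [integral_add hi1 hi2, e1] at e2
      linarith
    have := Finset.sum_le_card_nsmul S _ (2 * δ) hs
    simpa [hN] using this
  have hB : ∫ y, Metric.infDist (b y) (K' : Set UnitAddCircle) ∂(ν : Measure Y) ≤ δ := by
    refine le_trans ?_ hb
    apply integral_mono (cint (hD.comp hbc)) (nint (hβm.sub hbm))
    intro y
    have : Metric.infDist (b y) (K' : Set UnitAddCircle) ≤ dist (b y) (β y) :=
      Metric.infDist_le_dist_of_mem (hβK y)
    rwa [dist_comm, dist_eq_norm] at this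
  have hAlim := tendsto_finsetSum S fun s (_ : s ∈ S) =>
    tint hν (f := fun y => ‖a s y - (b (T s y) - b y)‖)
      ((ha s).sub ((hbc.comp (hTc s)).sub hbc)).norm
  have hBlim := tint hν (f := fun y => Metric.infDist (b y) (K' : Set UnitAddCircle))
    (hD.comp hbc)
  obtain ⟨i, hiA, hiB, hiK⟩ := ((hAlim.eventually_lt_const
    (lt_of_le_of_lt hA (by linarith : N * (2 * δ) < N * (2 * δ) + δ))).and
    ((hBlim.eventually_lt_const (lt_of_le_of_lt hB (by linarith : δ < 2 * δ))).and
      (hK' δ hδ0))).exists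
  obtain ⟨ρ, hρm, hρK, hρ⟩ := rounding (K := K i) hδ0
  have hm2 : Measurable fun y => b y - ρ (b y) := hbm.sub (hρm.comp hbm)
  have hC : ∫ y, ‖b y - ρ (b y)‖ ∂(μ i : Measure Y) ≤ 4 * δ := by
    have e : ∫ y, ‖b y - ρ (b y)‖ ∂(μ i : Measure Y) ≤
        ∫ y, (Metric.infDist (b y) (K' : Set UnitAddCircle) + 2 * δ) ∂(μ i : Measure Y) := by
      apply integral_mono (nint hm2) ((cint (hD.comp hbc)).add (integrable_const _))
      intro y
      have h1 := hρ (b y)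
      have h2 := (hiK (b y)).1
      change ‖b y - ρ (b y)‖ ≤ Metric.infDist (b y) (K' : Set UnitAddCircle) + 2 * δ
      linarith
    have hiD : Integrable (fun y => Metric.infDist (b y) (K' : Set UnitAddCircle))
        (μ i : Measure Y) := cint (hD.comp hbc)
    rw [integral_add hiD (integrable_const _)] at e
    simp only [integral_const, probReal_univ, one_smul] at e
    linarith
  have hfin := hno i (fun y => ρ (b y)) (hρm.comp hbm) (fun y => hρK _)
  have hs2 : ∀ s ∈ S, ∫ y, ‖a s y - (ρ (b (T s y)) - ρ (b y))‖ ∂(μ i : Measure Y) ≤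
      ∫ y, ‖a s y - (b (T s y) - b y)‖ ∂(μ i : Measure Y) + 8 * δ := by
    intro s hs
    have hi0 : Integrable (fun y => ‖a s y - (b (T s y) - b y)‖) (μ i : Measure Y) :=
      cint ((ha s).sub ((hbc.comp (hTc s)).sub hbc)).norm
    have hi1 : Integrable (fun y => ‖b (T s y) - ρ (b (T s y))‖) (μ i : Measure Y) :=
      nint (hm2.comp ((hmp i).1 s))
    have hi2 : Integrable (fun y => ‖b y - ρ (b y)‖) (μ i : Measure Y) := nint hm2
    have e1 : ∫ y, ‖b (T s y) - ρ (b (T s y))‖ ∂(μ i : Measure Y) =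
        ∫ y, ‖b y - ρ (b y)‖ ∂(μ i : Measure Y) :=
      mp_int (hmp i) s (f := fun y => ‖b y - ρ (b y)‖) hm2.norm
    have e2 : ∫ y, ‖a s y - (ρ (b (T s y)) - ρ (b y))‖ ∂(μ i : Measure Y) ≤
        ∫ y, (‖a s y - (b (T s y) - b y)‖ + (‖b (T s y) - ρ (b (T s y))‖ + ‖b y - ρ (b y)‖))
          ∂(μ i : Measure Y) := by
      apply integral_mono _ (hi0.add (hi1.add hi2))
      · intro y
        have : a s y - (ρ (b (T s y)) - ρ (b y)) = (a s y - (b (T s y) - b y)) +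
            ((b (T s y) - ρ (b (T s y))) - (b y - ρ (b y))) := by abel
        dsimp only
        rw [this]
        exact (norm_add_le _ _).trans (add_le_add le_rfl (norm_sub_le _ _))
      · exact nint ((ha s).measurable.sub
          (((hρm.comp hbm).comp ((hmp i).1 s)).sub (hρm.comp hbm)))
    have hi12 : Integrable (fun y => ‖b (T s y) - ρ (b (T s y))‖ + ‖b y - ρ (b y)‖)
        (μ i : Measure Y) := hi1.add hi2
    rw [integral_add hi0 hi12, integral_add hi1 hi2, e1] at e2
    linarith
  have hs3 := Finset.sum_le_sum hs2
  rw [Finset.sum_add_distrib, Finset.sum_const, nsmul_eq_mul, ← hN] at hs3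
  nlinarith

/-- **Near-cocycle version.**  Let `r` be as in the coboundary theorem for property-(T) groups.
For every `r' > 0` there are `ε > 0` and a finite set `F` of relations such that over every
ergodic `G`-system, every `K`-valued `(F, ε)`-near-cocycle of `S`-norm at most `r` is within
`r'` of a coboundary. -/
theorem near_cocycles_near_coboundaries {G : Type*} [Group G] (S : Finset G)
    (hsym : ∀ s ∈ S, s⁻¹ ∈ S) (hgen : Subgroup.closure (S : Set G) = ⊤)
    (hT : HasPropertyT G S)
    (r : ℝ) (hr : 0 < r)
    (hcob : ∀ (X : Type) (_ : MeasurableSpace X) (_ : StandardBorelSpace X) (μ : Measure X),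
      IsProbabilityMeasure μ →
      ∀ T : G → X → X, IsMPAction T μ → IsErgodicAction T μ →
        ∀ K : AddSubgroup UnitAddCircle, IsClosed (K : Set UnitAddCircle) →
          ∀ α : G → X → UnitAddCircle, IsCocycle S T μ K α →
            (∑ s ∈ S, ∫ x, ‖α s x‖ ∂μ) ≤ r →
            ∃ β : X → UnitAddCircle, Measurable β ∧ (∀ x, β x ∈ K) ∧
              ∀ s ∈ S, ∀ᵐ x ∂μ, α s x = β (T s x) - β x) :
    ∀ r' : ℝ, 0 < r' →
      ∃ (ε : ℝ) (F : Finset (List G)), 0 < ε ∧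
        (∀ w ∈ F, (∀ s ∈ w, s ∈ S) ∧ w.prod = 1) ∧
        ∀ (X : Type) (_ : MeasurableSpace X) (_ : StandardBorelSpace X) (μ : Measure X),
          IsProbabilityMeasure μ →
          ∀ T : G → X → X, IsMPAction T μ → IsErgodicAction T μ →
            ∀ K : AddSubgroup UnitAddCircle, IsClosed (K : Set UnitAddCircle) →
              ∀ α : G → X → UnitAddCircle,
                (∀ s ∈ S, Measurable (α s)) → (∀ s ∈ S, ∀ x, α s x ∈ K) →
                (∀ w ∈ F, (∫ x, ‖cocycleSum T α w x‖ ∂μ) < ε) →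
                (∑ s ∈ S, ∫ x, ‖α s x‖ ∂μ) ≤ r →
                ∃ β : X → UnitAddCircle, Measurable β ∧ (∀ x, β x ∈ K) ∧
                  (∑ s ∈ S, ∫ x, ‖α s x - (β (T s x) - β x)‖ ∂μ) < r' := by
  intro r' hr'
  classical
  have hcount : Countable G := countable_of_gen S hsym hgen
  let P : Type := Shrink.{0} (G × G)
  let e : G × G ≃ P := equivShrink.{0} (G × G)
  have hP : Countable P := e.symm.injective.countable
  let TY : G → (P → UnitAddCircle) → (P → UnitAddCircle) := fun g y p =>
    y (e ((e.symm p).1 * g, (e.symm p).2))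
  have hTYc : ∀ g, Continuous (TY g) := fun g =>
    continuous_pi fun p => continuous_apply _
  let a : G → (P → UnitAddCircle) → UnitAddCircle := fun s y => y (e (1, s))
  have hac : ∀ s, Continuous (a s) := fun s => continuous_apply _
  obtain ⟨ε, F, hε, hF, hmain⟩ := main_compact S hT r hTYc hac
    (fun μ h1 h2 h3 K hK α h4 h5 =>
      hcob (P → UnitAddCircle) inferInstance inferInstance μ h1 TY h2 h3 K hK α h4 h5) r' hr'
  refine ⟨ε, F, hε, hF, ?_⟩
  intro X mX _ μ hμ T hTmp hTerg K hK α hαm hαK hαF hαr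
  let α' : G → X → UnitAddCircle := fun s => if s ∈ S then α s else 0
  have hα'm : ∀ s, Measurable (α' s) := by
    intro s
    by_cases hs : s ∈ S
    · simpa [α', hs] using hαm s hs
    · simpa [α', hs] using measurable_zero
  let φ : X → (P → UnitAddCircle) := fun x p => α' (e.symm p).2 (T (e.symm p).1 x)
  have hφ : Measurable φ := measurable_pi_lambda _ fun p => (hα'm _).comp (hTmp.1 _)
  have hequi : ∀ g x, TY g (φ x) = φ (T g x) := by
    intro g x
    funext p
    simp only [TY, φ, Equiv.symm_apply_apply, hTmp.2.2.2, Function.comp]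
  have haφ : ∀ s ∈ S, ∀ x, a s (φ x) = α s x := by
    intro s hs x
    simp [a, φ, α', hs, hTmp.2.2.1]
  have hcs : ∀ w : List G, (∀ s ∈ w, s ∈ S) → ∀ x,
      cocycleSum TY a w (φ x) = cocycleSum T α w x := by
    intro w
    induction w with
    | nil => intro _ x; rfl
    | cons s w ih =>
      intro hw x
      change cocycleSum TY a w (φ x) + a s (TY w.prod (φ x)) =
        cocycleSum T α w x + α s (T w.prod x)
      rw [ih (fun t ht => hw t (List.mem_cons_of_mem _ ht)), hequi, haφ s (hw s (by simp))]
  have hprob : IsProbabilityMeasure (Measure.map φ μ) :=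
    Measure.isProbabilityMeasure_map hφ.aemeasurable
  have hint : ∀ f : (P → UnitAddCircle) → UnitAddCircle, Measurable f →
      ∫ y, ‖f y‖ ∂(Measure.map φ μ) = ∫ x, ‖f (φ x)‖ ∂μ := fun f hf =>
    integral_map hφ.aemeasurable hf.norm.aestronglyMeasurable
  obtain ⟨β, hβm, hβK, hβ⟩ := hmain (Measure.map φ μ) hprob
    ⟨fun g => (hTYc g).measurable, fun g => by
      rw [Measure.map_map (hTYc g).measurable hφ]
      have : TY g ∘ φ = φ ∘ T g := funext fun x => hequi g x
      rw [this, ← Measure.map_map hφ (hTmp.1 g), hTmp.2.1 g], by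
      funext y p
      simp [TY], by
      intro g h
      funext y p
      simp [TY, mul_assoc]⟩
    (by
      intro A hA hAi
      rw [Measure.map_apply hφ hA]
      refine hTerg _ (hφ hA) fun g => ?_
      ext x
      have h1 : φ (T g x) ∈ A ↔ φ x ∈ A := by
        rw [← hequi]
        conv_rhs => rw [← hAi g]
        rfl
      exact h1) K hK
    (by
      intro s hs
      refine (ae_map_iff (p := fun y => a s y ∈ K) hφ.aemeasurable
        ((hac s).measurable hK.measurableSet)).2 ?_
      refine Eventually.of_forall fun x => ?_
      change a s (φ x) ∈ K
      rw [haφ s hs]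
      exact hαK s hs x)
    (by
      intro w hw
      rw [hint _ (cs_cont hTYc hac w).measurable]
      simp_rw [hcs w (hF w hw).1]
      exact hαF w hw)
    (by
      refine le_trans (le_of_eq ?_) hαr
      refine Finset.sum_congr rfl fun s hs => ?_
      rw [hint _ (hac s).measurable]
      simp_rw [haφ s hs])
  refine ⟨β ∘ φ, hβm.comp hφ, fun x => hβK _, lt_of_le_of_lt (le_of_eq ?_) hβ⟩
  refine Finset.sum_congr rfl fun s hs => ?_
  rw [hint (fun y => a s y - (β (TY s y) - β y)) ((hac s).measurable.sub ((hβm.comp (hTYc s).measurable).sub hβm))]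
  simp_rw [haφ s hs, hequi]
  rfl
end

section
/- Let G be a countably infinite, residually finite group. Then there is a descending sequence G_1 > G_2 > … of finite-index subgroups of G such that: (i) each abelianization G_n/[G_n, G_n] is nontrivial; and (ii) the left-multiplication actions σ_n : G → Sym(G/G_n) form a sofic approximation to G. -/
open Filter Topology

/-- A sofic approximation to `G`: asymptotically multiplicative and asymptotically free
sequences of maps into symmetric groups of nonempty finite sets. -/
def IsSoficApprox {G : Type*} [Group G] (V : ℕ → Type*) (σ : ∀ n, G → Equiv.Perm (V n)) : Prop :=
  (∀ g h : G, Tendsto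
      (fun n => (Nat.card {v : V n // σ n g (σ n h v) = σ n (g * h) v} : ℝ) / (Nat.card (V n) : ℝ))
      atTop (𝓝 1)) ∧
  ∀ g : G, g ≠ 1 → Tendsto
      (fun n => (Nat.card {v : V n // σ n g v ≠ v} : ℝ) / (Nat.card (V n) : ℝ))
      atTop (𝓝 1)

/-- `G` is residually finite: every nonidentity element avoids some finite-index subgroup. -/
def ResiduallyFinite (G : Type*) [Group G] : Prop :=
  ∀ g : G, g ≠ 1 → ∃ H : Subgroup G, H.FiniteIndex ∧ g ∉ H

theorem step_aux {G : Type*} [Group G] [Infinite G] (hrf : ResiduallyFinite G)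
    (K : Subgroup G) (hK : K.FiniteIndex) (g : G) :
    ∃ K' : Subgroup G, K'.Normal ∧ K'.FiniteIndex ∧ K' < K ∧ (g ≠ 1 → g ∉ K') := by
  have hne : K ≠ ⊥ := by
    rintro rfl
    have h1 := hK.index_ne_zero
    rw [Subgroup.index_bot] at h1
    exact h1 Nat.card_eq_zero_of_infinite
  obtain ⟨x, hxK, hx⟩ := (Subgroup.bot_or_exists_ne_one K).resolve_left hne
  obtain ⟨H, hH, hxH⟩ := hrf x hx
  obtain ⟨H', hH', hgH⟩ : ∃ H' : Subgroup G, H'.FiniteIndex ∧ (g ≠ 1 → g ∉ H') := by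
    by_cases hg : g = 1
    · exact ⟨⊤, inferInstance, fun h => absurd hg h⟩
    · obtain ⟨H', h1, h2⟩ := hrf g hg
      exact ⟨H', h1, fun _ => h2⟩
  have hle := Subgroup.normalCore_le (K ⊓ H ⊓ H')
  refine ⟨(K ⊓ H ⊓ H').normalCore, inferInstance, inferInstance, ?_, ?_⟩
  · refine lt_of_le_of_ne (fun y hy => (hle hy).1.1) ?_
    intro h
    rw [← h] at hxK
    exact hxH (hle hxK).1.2
  · intro hg h
    exact hgH hg (hle h).2

theorem mid_aux {G : Type*} [Group G] (K K' : Subgroup G) (hn : K'.Normal)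
    (hf : K'.FiniteIndex) (hlt : K' < K) :
    ∃ L : Subgroup G, K' < L ∧ L ≤ K ∧ L.FiniteIndex ∧ Nontrivial (Abelianization ↥L) := by
  obtain ⟨x, hxK, hxK'⟩ := SetLike.exists_of_lt hlt
  let L : Subgroup G := (Subgroup.zpowers (QuotientGroup.mk' K' x)).comap (QuotientGroup.mk' K')
  have hxL : x ∈ L := Subgroup.mem_zpowers _
  have hle : K' ≤ L := by
    intro y hy
    have : QuotientGroup.mk' K' y = 1 := (QuotientGroup.eq_one_iff y).2 hy
    change QuotientGroup.mk' K' y ∈ Subgroup.zpowers (QuotientGroup.mk' K' x)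
    rw [this]
    exact one_mem _
  refine ⟨L, lt_of_le_of_ne hle ?_, ?_, Subgroup.finiteIndex_of_le hle, ?_⟩
  · intro h
    exact hxK' (h ▸ hxL)
  · rintro y ⟨k, hk⟩
    have h1 : QuotientGroup.mk' K' (x ^ k) = QuotientGroup.mk' K' y := by
      rw [map_zpow]; exact hk
    have h2 : (x ^ k)⁻¹ * y ∈ K' := QuotientGroup.eq.1 h1
    have h3 := K.mul_mem (K.zpow_mem hxK k) (hlt.le h2)
    simpa using h3
  · let f : L →* Subgroup.zpowers (QuotientGroup.mk' K' x) :=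
      (QuotientGroup.mk' K').subgroupComap _
    let _ : CommGroup (Subgroup.zpowers (QuotientGroup.mk' K' x)) :=
      { (inferInstance : Group (Subgroup.zpowers (QuotientGroup.mk' K' x))) with
        mul_comm := fun a b => (Subgroup.zpowers_isMulCommutative _).is_comm.comm a b }
    refine ⟨Abelianization.of ⟨x, hxL⟩, 1, fun h => ?_⟩
    have h1 : Abelianization.lift f (Abelianization.of (⟨x, hxL⟩ : L)) = 1 := by rw [h, map_one]
    rw [Abelianization.lift_apply_of] at h1
    have h2 : QuotientGroup.mk' K' x = 1 := congrArg Subtype.val h1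
    exact hxK' ((QuotientGroup.eq_one_iff x).1 h2)

/-- For a countably infinite residually finite group `G` there is a strictly descending sequence
of finite-index subgroups, each with nontrivial abelianization, whose left-multiplication
actions on the coset spaces form a sofic approximation to `G`. -/
theorem exists_descending_subgroups_sofic (G : Type*) [Group G] [Countable G] [Infinite G]
    (hrf : ResiduallyFinite G) :
    ∃ Gn : ℕ → Subgroup G,
      (∀ n, Gn (n + 1) < Gn n) ∧
      (∀ n, (Gn n).FiniteIndex) ∧
      (∀ n, Nontrivial (Abelianization ↥(Gn n))) ∧
      IsSoficApprox (fun n => G ⧸ Gn n)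
        (fun n g => MulAction.toPerm (α := G) (β := G ⧸ Gn n) g) := by
  obtain ⟨e, he⟩ := exists_surjective_nat G
  choose! F hFn hFf hFlt hFg using
    fun (K : Subgroup G) (hK : K.FiniteIndex) (g : G) => step_aux hrf K hK g
  let P : ℕ → Subgroup G := fun n => Nat.rec ⊤ (fun k K => F K (e k)) n
  have hPs : ∀ n, P (n + 1) = F (P n) (e n) := fun n => rfl
  have hPf : ∀ n, (P n).FiniteIndex := by
    intro n
    induction n with
    | zero => exact (inferInstance : (⊤ : Subgroup G).FiniteIndex)
    | succ k ih => rw [hPs]; exact hFf _ ih _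
  have hPn : ∀ n, (P n).Normal := by
    intro n
    cases n with
    | zero => exact (inferInstance : (⊤ : Subgroup G).Normal)
    | succ k => rw [hPs]; exact hFn _ (hPf k) _
  have hPlt : ∀ n, P (n + 1) < P n := fun n => hFlt _ (hPf n) _
  have hPanti : Antitone P := antitone_nat_of_succ_le fun n => (hPlt n).le
  choose L hL1 hL2 hL3 hL4 using
    fun n => mid_aux (P n) (P (n + 1)) (hPn (n + 1)) (hPf (n + 1)) (hPlt n)
  refine ⟨L, fun n => (hL2 (n + 1)).trans_lt (hL1 n), hL3, hL4, ?_, ?_⟩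
  · intro g h
    refine tendsto_const_nhds.congr fun n => ?_
    have := hL3 n
    have hc : (Nat.card (G ⧸ L n) : ℝ) ≠ 0 := Nat.cast_ne_zero.2 Nat.card_pos.ne'
    rw [Nat.card_congr (Equiv.subtypeUnivEquiv fun v => ?_), div_self hc]
    simp [mul_smul]
  · intro g hg
    obtain ⟨k, rfl⟩ := he g
    refine tendsto_const_nhds.congr' ?_
    filter_upwards [eventually_ge_atTop (k + 1)] with n hn
    have := hL3 n
    have hc : (Nat.card (G ⧸ L n) : ℝ) ≠ 0 := Nat.cast_ne_zero.2 Nat.card_pos.ne'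
    rw [Nat.card_congr (Equiv.subtypeUnivEquiv fun v => ?_), div_self hc]
    intro hv
    induction v using QuotientGroup.induction_on with
    | H y =>
      have h1 : ((e k * y : G) : G ⧸ L n) = (y : G ⧸ L n) := hv
      have h2 := hPanti hn (hL2 n (QuotientGroup.eq.1 h1.symm))
      have h3 := (hPn (k + 1)).conj_mem _ h2 y
      have h4 : e k ∈ P (k + 1) := by simpa [mul_assoc] using h3
      exact hFg _ (hPf k) _ hg h4
end
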